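/- arXiv:1810.04949 — 6 statements merged into one kernel-verified Lean document; each statement's English description precedes it below -/
import Mathlib

section
/- There exists a positive constant c (depending on d, α, ν) such that for all t > 0 and all R > 0: ∫_{B(0,R)^c} p_t(y) dy ≤ c t / R^{α}. -/
open MeasureTheory Real
open scoped RealInnerProductSpace

/-- The heat kernel of the fractional Laplacian `-ν(-Δ)^(α/2)` on `ℝ^d`:
`p_t(x) = (2π)^{-d} ∫ e^{-i x·z} e^{-tν|z|^α} dz`. -/
noncomputable def stableKernel (d : ℕ) (ν α t : ℝ) (x : EuclideanSpace ℝ (Fin d)) : ℝ :=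
  ((2 * Real.pi) ^ d)⁻¹ *
    (∫ z : EuclideanSpace ℝ (Fin d),
      Complex.exp (-(Complex.I * (⟪x, z⟫ : ℝ))) *
        Complex.exp (-((t * ν * ‖z‖ ^ α : ℝ) : ℂ))).re



namespace StableAux
open Filter Topology

abbrev E (d : ℕ) := EuclideanSpace ℝ (Fin d)

/-- weighted test positivity -/
def T {d : ℕ} (ψ : E d → ℝ) : Prop :=
  Measurable ψ ∧ (∃ M, ∀ z, |ψ z| ≤ M) ∧
    ∀ ε > (0:ℝ), ∀ x : E d, 0 ≤ ∫ z : E d, Real.cos ⟪x, z⟫ * (ψ z * Real.exp (-ε * ‖z‖ ^ 2))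

/-- positivity preserving multipliers -/
def D {d : ℕ} (φ : E d → ℝ) : Prop := ∀ ψ, T ψ → T (fun z => φ z * ψ z)

lemma integrable_gauss {d : ℕ} {b : ℝ} (hb : 0 < b) :
    Integrable (fun z : E d => Real.exp (-b * ‖z‖ ^ 2)) := by
  have := (GaussianFourier.integrable_cexp_neg_mul_sq_norm_add (V := E d) (b := (b:ℂ)) (by simpa using hb) 0 0).re
  refine this.congr (Eventually.of_forall fun z => ?_)
  have h : (-(b:ℂ) * (‖z‖:ℂ) ^ 2) = ((-b * ‖z‖ ^ 2 : ℝ) : ℂ) := by push_cast; ring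
  simp only [zero_mul, add_zero]
  rw [h, ← Complex.ofReal_exp]; rfl

lemma fourier_gauss {d : ℕ} {b : ℝ} (hb : 0 < b) (x : E d) :
    ∫ z : E d, Real.cos ⟪x, z⟫ * Real.exp (-b * ‖z‖ ^ 2)
      = (π / b) ^ ((d:ℝ) / 2) * Real.exp (-(1 / (4 * b)) * ‖x‖ ^ 2) := by
  have h1 := GaussianFourier.integrable_cexp_neg_mul_sq_norm_add (V := E d) (b := (b:ℂ))
    (by simpa using hb) Complex.I x
  have h2 := GaussianFourier.integral_cexp_neg_mul_sq_norm_add (V := E d) (b := (b:ℂ))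
    (by simpa using hb) Complex.I x
  have h3 := congrArg Complex.re h2
  have h4 := integral_re h1
  simp only [RCLike.re_to_complex] at h4
  rw [← h4] at h3
  have e1 : ∀ z : E d, (Complex.exp (-(b:ℂ) * (‖z‖:ℂ) ^ 2 + Complex.I * ((⟪x, z⟫ : ℝ) : ℂ))).re
      = Real.cos ⟪x, z⟫ * Real.exp (-b * ‖z‖ ^ 2) := by
    intro z
    rw [Complex.exp_re]
    have : (-(b:ℂ) * (‖z‖:ℂ) ^ 2) = ((-b * ‖z‖ ^ 2 : ℝ) : ℂ) := by push_cast; ring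
    rw [this]
    simp only [Complex.add_re, Complex.add_im, Complex.ofReal_re, Complex.ofReal_im, Complex.mul_re, Complex.mul_im, Complex.I_re, Complex.I_im]
    ring_nf
  simp only [e1] at h3
  rw [h3]
  have e2 : ((π:ℂ) / b) ^ ((Module.finrank ℝ (E d) : ℂ) / 2) = (((π / b) ^ ((d:ℝ) / 2) : ℝ) : ℂ) := by
    rw [Complex.ofReal_cpow (by positivity)]; simp
  have e3 : Complex.exp (Complex.I ^ 2 * (‖x‖:ℂ) ^ 2 / (4 * b)) = ((Real.exp (-(1 / (4 * b)) * ‖x‖ ^ 2) : ℝ) : ℂ) := by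
    rw [Complex.ofReal_exp, Complex.I_sq]; congr 1; push_cast; ring
  rw [e2, e3, ← Complex.ofReal_mul, Complex.ofReal_re]

lemma T_integrable {d : ℕ} {ψ : E d → ℝ} (hm : Measurable ψ) {M : ℝ} (hM : ∀ z, |ψ z| ≤ M)
    {ε : ℝ} (hε : 0 < ε) (x : E d) :
    Integrable (fun z : E d => Real.cos ⟪x, z⟫ * (ψ z * Real.exp (-ε * ‖z‖ ^ 2))) := by
  refine ((integrable_gauss (d := d) hε).const_mul M).mono' (by fun_prop) (Eventually.of_forall fun z => ?_)
  have h0 : 0 ≤ M := (abs_nonneg _).trans (hM 0)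
  rw [norm_mul, norm_mul, Real.norm_eq_abs, Real.norm_eq_abs, Real.norm_eq_abs, abs_of_pos (Real.exp_pos _), ← mul_assoc]
  gcongr
  calc _ ≤ 1 * M := mul_le_mul (Real.abs_cos_le_one _) (hM z) (abs_nonneg _) zero_le_one
    _ = M := one_mul _

lemma T_one {d : ℕ} : T (fun _ : E d => (1:ℝ)) := by
  refine ⟨measurable_const, ⟨1, by simp⟩, fun ε hε x => ?_⟩
  simp only [one_mul]
  rw [fourier_gauss hε]; positivity

lemma T_lim {d : ℕ} {φ : ℕ → E d → ℝ} {ψ : E d → ℝ} (h : ∀ n, T (φ n)) (M : ℝ)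
    (hM : ∀ n z, |φ n z| ≤ M) (hl : ∀ z, Tendsto (fun n => φ n z) atTop (𝓝 (ψ z))) : T ψ := by
  refine ⟨measurable_of_tendsto_metrizable (fun n => (h n).1) (tendsto_pi_nhds.2 hl), ⟨M, fun z => ?_⟩, fun ε hε x => ?_⟩
  · exact le_of_tendsto (hl z).abs (Eventually.of_forall fun n => hM n z)
  · have : Tendsto (fun n => ∫ z : E d, Real.cos ⟪x, z⟫ * (φ n z * Real.exp (-ε * ‖z‖ ^ 2))) atTop
        (𝓝 (∫ z : E d, Real.cos ⟪x, z⟫ * (ψ z * Real.exp (-ε * ‖z‖ ^ 2)))) := by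
      refine tendsto_integral_of_dominated_convergence (fun z => M * Real.exp (-ε * ‖z‖ ^ 2)) 
        (fun n => (T_integrable (h n).1 (hM n) hε x).1) ((integrable_gauss hε).const_mul M)
        (fun n => Eventually.of_forall fun z => ?_) (Eventually.of_forall fun z => ?_)
      · rw [norm_mul, norm_mul, Real.norm_eq_abs, Real.norm_eq_abs, Real.norm_eq_abs, abs_of_pos (Real.exp_pos _), ← mul_assoc]
        gcongr
        calc _ ≤ 1 * M := mul_le_mul (Real.abs_cos_le_one _) (hM n z) (abs_nonneg _) zero_le_one
          _ = M := one_mul _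
      · exact ((hl z).mul_const _).const_mul _
    exact ge_of_tendsto this (Eventually.of_forall fun n => (h n).2.2 ε hε x)

lemma D_lim {d : ℕ} {φ : ℕ → E d → ℝ} {ψ : E d → ℝ} (h : ∀ n, D (φ n)) (M : ℝ)
    (hM : ∀ n z, |φ n z| ≤ M) (hl : ∀ z, Tendsto (fun n => φ n z) atTop (𝓝 (ψ z))) : D ψ := by
  intro χ hχ
  obtain ⟨K, hK⟩ := hχ.2.1
  refine T_lim (fun n => h n χ hχ) (M * K) (fun n z => ?_) (fun z => (hl z).mul_const _)
  rw [abs_mul]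
  exact mul_le_mul (hM n z) (hK z) (abs_nonneg _) ((abs_nonneg _).trans (hM n z))

lemma D_mul {d : ℕ} {φ ψ : E d → ℝ} (h1 : D φ) (h2 : D ψ) : D (fun z => φ z * ψ z) := by
  intro χ hχ
  simpa only [mul_assoc] using h1 _ (h2 χ hχ)

lemma D_one {d : ℕ} : D (fun _ : E d => (1:ℝ)) := by
  intro χ hχ; simpa using hχ

lemma D_const_mul {d : ℕ} {φ : E d → ℝ} {c : ℝ} (hc : 0 ≤ c) (h : D φ) : D (fun z => c * φ z) := by
  intro χ hχ
  obtain ⟨h1, ⟨M, hM⟩, h3⟩ := h χ hχ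
  refine ⟨by simpa only [mul_assoc] using h1.const_mul c, ⟨c * M, fun z => ?_⟩, fun ε hε x => ?_⟩
  · simp only [mul_assoc]; rw [abs_mul, abs_of_nonneg hc]; exact mul_le_mul_of_nonneg_left (hM z) hc
  · have := mul_nonneg hc (h3 ε hε x)
    rw [← integral_const_mul] at this
    refine this.trans_eq (integral_congr_ae (Eventually.of_forall fun z => ?_))
    ring

lemma D_add {d : ℕ} {φ ψ : E d → ℝ} (h1 : D φ) (h2 : D ψ) : D (fun z => φ z + ψ z) := by
  intro χ hχ
  obtain ⟨h1, ⟨M, hM⟩, h3⟩ := h1 χ hχ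
  obtain ⟨h1', ⟨M', hM'⟩, h3'⟩ := h2 χ hχ
  refine ⟨by simp only [add_mul]; exact h1.add h1', ⟨M + M', fun z => ?_⟩, fun ε hε x => ?_⟩
  · simp only [add_mul]; exact (abs_add_le _ _).trans (add_le_add (hM z) (hM' z))
  · have := add_nonneg (h3 ε hε x) (h3' ε hε x)
    rw [← integral_add (T_integrable h1 hM hε x) (T_integrable h1' hM' hε x)] at this
    refine this.trans_eq (integral_congr_ae (Eventually.of_forall fun z => ?_))
    ring

lemma D_pow {d : ℕ} {φ : E d → ℝ} (h : D φ) (n : ℕ) : D (fun z => φ z ^ n) := by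
  induction n with
  | zero => simpa using D_one
  | succ n ih => simpa only [pow_succ] using D_mul ih h

lemma D_bdd {d : ℕ} {φ : E d → ℝ} (h : D φ) : ∃ M, ∀ z, |φ z| ≤ M := by
  obtain ⟨M, hM⟩ := (h _ T_one).2.1
  exact ⟨M, by simpa using hM⟩

lemma D_exp {d : ℕ} {φ : E d → ℝ} (h : D φ) : D (fun z => Real.exp (φ z)) := by
  obtain ⟨M, hM⟩ := D_bdd h
  have h0 : ∀ n, D (fun z => ∑ i ∈ Finset.range (n+1), φ z ^ i / (i.factorial : ℝ)) := by
    intro n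
    induction n with
    | zero => simpa using D_one
    | succ n ih =>
      simp only [Finset.sum_range_succ _ (n+1)]
      refine D_add ih ?_
      have := D_const_mul (c := ((n+1).factorial : ℝ)⁻¹) (by positivity) (D_pow h (n+1))
      simpa only [div_eq_inv_mul] using this
  refine D_lim h0 (Real.exp M) (fun n z => ?_) (fun z => ?_)
  · calc |∑ i ∈ Finset.range (n+1), φ z ^ i / (i.factorial : ℝ)|
        ≤ ∑ i ∈ Finset.range (n+1), |φ z ^ i / (i.factorial : ℝ)| := Finset.abs_sum_le_sum_abs _ _
      _ ≤ ∑ i ∈ Finset.range (n+1), M ^ i / (i.factorial : ℝ) := by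
          gcongr with i
          rw [abs_div, abs_pow, Nat.abs_cast]
          gcongr
          exact hM z
      _ ≤ Real.exp M := Real.sum_le_exp_of_nonneg ((abs_nonneg _).trans (hM 0)) _
  · have := (NormedSpace.expSeries_div_hasSum_exp (φ z)).tendsto_sum_nat
    rw [← Real.exp_eq_exp_ℝ] at this
    exact this.comp (tendsto_add_atTop_nat 1)

lemma D_gauss {d : ℕ} {s : ℝ} (hs : 0 ≤ s) : D (fun z : E d => Real.exp (-s * ‖z‖ ^ 2)) := by
  intro χ hχ
  obtain ⟨h1, ⟨M, hM⟩, h3⟩ := hχ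
  refine ⟨by fun_prop, ⟨M, fun z => ?_⟩, fun ε hε x => ?_⟩
  · rw [abs_mul, abs_of_pos (Real.exp_pos _)]
    calc _ ≤ 1 * M := mul_le_mul (Real.exp_le_one_iff.2 (by nlinarith [sq_nonneg ‖z‖])) (hM z) (abs_nonneg _) zero_le_one
      _ = M := one_mul _
  · have := h3 (s + ε) (by positivity) x
    convert this using 4 with z
    beta_reduce
    rw [mul_comm (Real.exp _), mul_assoc, ← Real.exp_add]; ring_nf

lemma D_int {d : ℕ} (μ : Measure ℝ) [SFinite μ] (g : ℝ → E d → ℝ)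
    (hm : Measurable (Function.uncurry g)) (M : ℝ → ℝ) (hMi : Integrable M μ)
    (hb : ∀ᵐ r ∂μ, ∀ z, |g r z| ≤ M r) (hD : ∀ᵐ r ∂μ, D (g r)) : D (fun z => ∫ r, g r z ∂μ) := by
  intro χ hχ
  obtain ⟨h1, ⟨K, hK⟩, h3⟩ := id hχ
  have hK0 : 0 ≤ K := (abs_nonneg _).trans (hK 0)
  refine ⟨?_, ⟨(∫ r, M r ∂μ) * K, fun z => ?_⟩, fun ε hε x => ?_⟩
  · refine Measurable.mul ?_ h1
    have : StronglyMeasurable (Function.uncurry (fun z r => g r z)) :=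
      (hm.comp measurable_swap).stronglyMeasurable
    exact this.integral_prod_right.measurable
  · rw [abs_mul]
    have : |∫ r, g r z ∂μ| ≤ ∫ r, M r ∂μ :=
      norm_integral_le_of_norm_le (f := fun r => g r z) hMi (hb.mono fun r hr => hr z)
    exact mul_le_mul this (hK z) (abs_nonneg _) ((abs_nonneg _).trans this)
  · have hswap : ∫ z : E d, ∫ r, Real.cos ⟪x, z⟫ * (g r z * χ z * Real.exp (-ε * ‖z‖ ^ 2)) ∂μ
        = ∫ r, (∫ z : E d, Real.cos ⟪x, z⟫ * (g r z * χ z * Real.exp (-ε * ‖z‖ ^ 2))) ∂μ := by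
      refine integral_integral_swap ?_
      have hint := ((integrable_gauss (d := d) hε).mul_prod hMi).const_mul K
      refine hint.mono' ?_ ?_
      · have hg : Measurable (fun p : E d × ℝ => g p.2 p.1) := hm.comp measurable_swap
        have : Measurable (fun p : E d × ℝ => Real.cos ⟪x, p.1⟫ * (g p.2 p.1 * χ p.1 * Real.exp (-ε * ‖p.1‖ ^ 2))) := by
          fun_prop
        exact this.aestronglyMeasurable
      · have : ∀ᵐ p ∂((volume : Measure (E d)).prod μ), ∀ z, |g p.2 z| ≤ M p.2 :=
          Measure.quasiMeasurePreserving_snd.ae hb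
        filter_upwards [this] with p hp
        simp only [Function.uncurry]
        rw [norm_mul, norm_mul, norm_mul]
        simp only [Real.norm_eq_abs, abs_of_pos (Real.exp_pos _)]
        have hp1 := hp p.1
        have hM0 := (abs_nonneg _).trans hp1
        calc _ ≤ 1 * (M p.2 * K * Real.exp (-ε * ‖p.1‖ ^ 2)) := by
              gcongr
              · exact Real.abs_cos_le_one _
              · exact hK _
          _ = _ := by ring
    have e : ∀ z : E d, Real.cos ⟪x, z⟫ * ((∫ r, g r z ∂μ) * χ z * Real.exp (-ε * ‖z‖ ^ 2))
        = ∫ r, Real.cos ⟪x, z⟫ * (g r z * χ z * Real.exp (-ε * ‖z‖ ^ 2)) ∂μ := by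
      intro z
      rw [integral_const_mul, integral_mul_const, integral_mul_const]
    simp only [e]
    rw [hswap]
    refine integral_nonneg_of_ae (hD.mono fun r hr => ?_)
    exact (hr χ hχ).2.2 ε hε x

lemma D_inv {d : ℕ} {s : ℝ} (hs : 0 < s) : D (fun z : E d => (s + ‖z‖ ^ 2)⁻¹) := by
  have h := D_int (d := d) (volume.restrict (Set.Ioi (0:ℝ)))
    (fun r z => Real.exp (-s * r) * Real.exp (-r * ‖z‖ ^ 2)) (by fun_prop)
    (fun r => Real.exp (-s * r)) (integrableOn_exp_mul_Ioi (by linarith) 0) ?_ ?_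
  · convert h using 2 with z
    have : ∀ r : ℝ, Real.exp (-s * r) * Real.exp (-r * ‖z‖ ^ 2) = Real.exp (-(s + ‖z‖ ^ 2) * r) := by
      intro r; rw [← Real.exp_add]; ring_nf
    simp only [this]
    have h2 : 0 < s + ‖z‖ ^ 2 := by positivity
    rw [integral_exp_mul_Ioi (by linarith)]
    rw [mul_zero, Real.exp_zero, neg_div_neg_eq, one_div]
  · filter_upwards [ae_restrict_mem measurableSet_Ioi] with r hr z
    have hr : 0 < r := hr
    rw [abs_of_pos (by positivity)]
    refine mul_le_of_le_one_right (Real.exp_pos _).le (Real.exp_le_one_iff.2 ?_)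
    nlinarith [sq_nonneg ‖z‖]
  · filter_upwards [ae_restrict_mem measurableSet_Ioi] with r hr
    exact D_const_mul (Real.exp_pos _).le (D_gauss (le_of_lt hr))

lemma D_stable {d : ℕ} {p a : ℝ} (hp : p ∈ Set.Ioo (0:ℝ) 1) (ha : 0 < a) :
    D (fun z : E d => Real.exp (-a * (‖z‖ ^ 2) ^ p)) := by
  set C := ∫ t in Set.Ioi (0:ℝ), rpowIntegrand₀₁ p t 1 with hC
  have hC0 : 0 < C := integral_rpowIntegrand₀₁_one_pos hp
  set b := a / C with hb
  have hb0 : 0 < b := by positivity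
  set S : ℕ → Set ℝ := fun n => Set.Ioc (1 / ((n:ℝ) + 1)) (n + 1) with hS
  have hSm : ∀ n, MeasurableSet (S n) := fun n => measurableSet_Ioc
  have hmono : Monotone S := by
    intro m n hmn
    have : (m:ℝ) ≤ n := by exact_mod_cast hmn
    exact Set.Ioc_subset_Ioc (by gcongr) (by gcongr)
  have hpos : ∀ n, ∀ s ∈ S n, 0 < s := fun n s hs => lt_trans (by positivity) hs.1
  have hU : (⋃ n, S n) = Set.Ioi 0 := by
    ext s
    simp only [Set.mem_iUnion, Set.mem_Ioi]
    constructor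
    · rintro ⟨n, hn⟩; exact hpos n s hn
    · intro hs
      obtain ⟨n, hn⟩ := exists_nat_gt (max s (1 / s))
      refine ⟨n, ?_, ?_⟩
      · rw [div_lt_iff₀ (by positivity)]
        have : 1 / s < n := (le_max_right _ _).trans_lt hn
        rw [div_lt_iff₀ hs] at this
        nlinarith
      · have := (le_max_left s (1/s)).trans_lt hn
        linarith
  have hbd : ∀ n, ∀ s ∈ S n, s ^ p ≤ (n + 1 : ℝ) ^ p ∧ s⁻¹ ≤ n + 1 := by
    intro n s hs
    have h0 := hpos n s hs
    refine ⟨Real.rpow_le_rpow h0.le hs.2 hp.1.le, ?_⟩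
    have h1 := hs.1.le
    rw [inv_le_comm₀ h0 (by positivity)]
    simpa using h1
  have hvol : ∀ n, IsFiniteMeasure (volume.restrict (S n)) := fun n =>
    ⟨by rw [Measure.restrict_apply_univ]; exact measure_Ioc_lt_top⟩
  have hI : ∀ n, D (fun z : E d => ∫ s in S n, s ^ p * (s + ‖z‖ ^ 2)⁻¹) := by
    intro n
    have := hvol n
    refine D_int (volume.restrict (S n)) (fun s z => s ^ p * (s + ‖z‖ ^ 2)⁻¹) (by fun_prop)
      (fun _ => (n + 1 : ℝ) ^ p * (n + 1)) (integrable_const _) ?_ ?_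
    · filter_upwards [ae_restrict_mem (hSm n)] with s hs z
      have h0 := hpos n s hs
      rw [abs_of_nonneg (by positivity)]
      have h1 := hbd n s hs
      have h2 : (s + ‖z‖ ^ 2)⁻¹ ≤ s⁻¹ := by gcongr; nlinarith [sq_nonneg ‖z‖]
      exact mul_le_mul h1.1 (h2.trans h1.2) (by positivity) (by positivity)
    · filter_upwards [ae_restrict_mem (hSm n)] with s hs
      have h0 := hpos n s hs
      exact D_const_mul (by positivity) (D_inv h0)
  have hint : ∀ n, ∀ u : ℝ, 0 ≤ u → IntegrableOn (fun s => s ^ p * (s + u)⁻¹) (S n) := by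
    intro n u hu
    have := hvol n
    refine Integrable.mono' (integrable_const ((n + 1 : ℝ) ^ p * (n + 1))) (by fun_prop) ?_
    filter_upwards [ae_restrict_mem (hSm n)] with s hs
    have h0 := hpos n s hs
    rw [Real.norm_eq_abs, abs_of_nonneg (by positivity)]
    have h1 := hbd n s hs
    have h2 : (s + u)⁻¹ ≤ s⁻¹ := by gcongr; linarith
    exact mul_le_mul h1.1 (h2.trans h1.2) (by positivity) (by positivity)
  have hsplit : ∀ n, ∀ u : ℝ, 0 ≤ u → ∫ s in S n, rpowIntegrand₀₁ p s u =
      (∫ s in S n, s ^ p * s⁻¹) - ∫ s in S n, s ^ p * (s + u)⁻¹ := by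
    intro n u hu
    have h00 : IntegrableOn (fun s => s ^ p * s⁻¹) (S n) := by simpa using hint n 0 le_rfl
    rw [← integral_sub h00 (hint n u hu)]
    simp only [rpowIntegrand₀₁, mul_sub]
  refine D_lim (φ := fun n z => Real.exp (-b * ∫ s in S n, rpowIntegrand₀₁ p s (‖z‖ ^ 2)))
    (fun n => ?_) 1 (fun n z => ?_) (fun z => ?_)
  · have := D_const_mul (c := Real.exp (-b * ∫ s in S n, s ^ p * s⁻¹)) (Real.exp_pos _).le
      (D_exp (D_const_mul hb0.le (hI n)))
    convert this using 2 with z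
    rw [hsplit n _ (by positivity), ← Real.exp_add]; congr 1; ring
  · rw [abs_of_pos (Real.exp_pos _)]
    refine Real.exp_le_one_iff.2 ?_
    have : 0 ≤ ∫ s in S n, rpowIntegrand₀₁ p s (‖z‖ ^ 2) :=
      setIntegral_nonneg (hSm n) fun s hs => rpowIntegrand₀₁_nonneg hp.1 (hpos n s hs).le (by positivity)
    nlinarith
  · have h1 := tendsto_setIntegral_of_monotone (f := fun s => rpowIntegrand₀₁ p s (‖z‖ ^ 2)) hSm hmono
      (by rw [hU]; exact integrableOn_rpowIntegrand₀₁_Ioi hp (by positivity))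
    rw [hU, integral_rpowIntegrand₀₁_eq_rpow_mul_const hp (by positivity)] at h1
    have h2 := (Real.continuous_exp.tendsto _).comp (h1.const_mul (-b))
    have h3 : -b * ((‖z‖ ^ 2) ^ p * C) = -a * (‖z‖ ^ 2) ^ p := by
      rw [hb]; field_simp
    rw [h3] at h2
    exact h2

lemma integrable_f {d : ℕ} (hd : 1 ≤ d) {α a : ℝ} (hα : 0 < α) (ha : 0 < a) :
    Integrable (fun z : E d => Real.exp (-a * ‖z‖ ^ α)) := by
  have : Nontrivial (E d) := by
    have : Nonempty (Fin d) := ⟨⟨0, hd⟩⟩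
    infer_instance
  rw [integrable_fun_norm_addHaar (μ := (volume : Measure (E d))) (f := fun r => Real.exp (-a * r ^ α))]
  refine (integrableOn_rpow_mul_exp_neg_mul_rpow (p := α) (b := a) (s := (d - 1 : ℕ)) ?_ hα ha).congr_fun ?_ measurableSet_Ioi
  · exact lt_of_lt_of_le (by norm_num) (Nat.cast_nonneg _)
  · intro x hx
    simp

lemma integrable_H {d : ℕ} (hd : 1 ≤ d) {α a : ℝ} (hα : 0 < α) (ha : 0 < a) :
    Integrable (fun z : E d => ‖z‖ ^ α * Real.exp (-a * ‖z‖ ^ 2)) := by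
  have : Nontrivial (E d) := by
    have : Nonempty (Fin d) := ⟨⟨0, hd⟩⟩
    infer_instance
  rw [integrable_fun_norm_addHaar (μ := (volume : Measure (E d))) (f := fun r => r ^ α * Real.exp (-a * r ^ 2))]
  refine (integrableOn_rpow_mul_exp_neg_mul_sq (b := a) (s := (d - 1 : ℕ) + α) ha ?_).congr_fun ?_ measurableSet_Ioi
  · have : (0:ℝ) ≤ ((d - 1 : ℕ) : ℝ) := Nat.cast_nonneg _
    linarith
  · intro x hx
    simp only [Real.rpow_add (show 0 < x from hx), Real.rpow_natCast, smul_eq_mul]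
    simp [mul_assoc]

lemma cos_f_nonneg {d : ℕ} (hd : 1 ≤ d) {α a : ℝ} (hα : 0 < α) (hα2 : α ≤ 2) (ha : 0 < a) (x : E d) :
    0 ≤ ∫ z : E d, Real.cos ⟪x, z⟫ * Real.exp (-a * ‖z‖ ^ α) := by
  have hD : D (fun z : E d => Real.exp (-a * ‖z‖ ^ α)) := by
    rcases hα2.eq_or_lt with rfl | h
    · simpa using D_gauss (d := d) ha.le
    · have := D_stable (d := d) (p := α / 2) (a := a) ⟨by linarith, by linarith⟩ ha
      have e : ∀ z : E d, (‖z‖ ^ 2) ^ (α / 2) = ‖z‖ ^ α := by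
        intro z
        rw [← Real.rpow_natCast, ← Real.rpow_mul (norm_nonneg _)]
        congr 1; push_cast; ring
      simpa only [e] using this
  have hT := hD _ T_one
  have hlim : Tendsto (fun n : ℕ => ∫ z : E d, Real.cos ⟪x, z⟫ * (Real.exp (-a * ‖z‖ ^ α) * 1 *
      Real.exp (-(1 / ((n:ℝ) + 1)) * ‖z‖ ^ 2))) atTop
      (𝓝 (∫ z : E d, Real.cos ⟪x, z⟫ * Real.exp (-a * ‖z‖ ^ α))) := by
    refine tendsto_integral_of_dominated_convergence (fun z => Real.exp (-a * ‖z‖ ^ α))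
      (fun n => by fun_prop) (integrable_f hd hα ha) (fun n => Eventually.of_forall fun z => ?_)
      (Eventually.of_forall fun z => ?_)
    · rw [norm_mul, norm_mul, mul_one]
      simp only [Real.norm_eq_abs, abs_of_pos (Real.exp_pos _)]
      have h1 : Real.exp (-(1 / ((n:ℝ) + 1)) * ‖z‖ ^ 2) ≤ 1 := by
        refine Real.exp_le_one_iff.2 ?_
        have : 0 ≤ (1 / ((n:ℝ) + 1)) * ‖z‖ ^ 2 := by positivity
        linarith
      calc _ ≤ 1 * (Real.exp (-a * ‖z‖ ^ α) * 1) := by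
            gcongr
            exact Real.abs_cos_le_one _
        _ = _ := by ring
    · have h1 : Tendsto (fun n : ℕ => Real.exp (-(1 / ((n:ℝ) + 1)) * ‖z‖ ^ 2)) atTop (𝓝 1) := by
        have := (Real.continuous_exp.tendsto _).comp
          ((tendsto_one_div_add_atTop_nhds_zero_nat (𝕜 := ℝ)).neg.mul_const (‖z‖ ^ 2))
        simpa [Function.comp_def] using this
      have := (h1.const_mul (Real.exp (-a * ‖z‖ ^ α) * 1)).const_mul (Real.cos ⟪x, z⟫)
      simpa using this
  exact ge_of_tendsto hlim (Eventually.of_forall fun n => hT.2.2 _ (by positivity) x)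

/-- unnormalised kernel -/
noncomputable def q (d : ℕ) (α a : ℝ) (x : E d) : ℝ :=
  ∫ z : E d, Real.cos ⟪x, z⟫ * Real.exp (-a * ‖z‖ ^ α)

lemma kernel_eq (d : ℕ) (hd : 1 ≤ d) {ν α t : ℝ} (hν : 0 < ν) (hα : 0 < α) (ht : 0 < t) (x : E d) :
    stableKernel d ν α t x = ((2 * Real.pi) ^ d)⁻¹ * q d α (t * ν) x := by
  unfold stableKernel q
  congr 1
  have hint : Integrable (fun z : E d => Complex.exp (-(Complex.I * (⟪x, z⟫ : ℝ))) *
        Complex.exp (-((t * ν * ‖z‖ ^ α : ℝ) : ℂ))) := by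
    refine (integrable_f hd hα (mul_pos ht hν)).mono' (by fun_prop) (Eventually.of_forall fun z => ?_)
    rw [norm_mul, Complex.norm_exp, Complex.norm_exp]
    simp
  have h4 := integral_re hint
  simp only [RCLike.re_to_complex] at h4
  rw [← h4]
  congr 1
  ext z
  rw [← Complex.exp_add, Complex.exp_re]
  simp only [Complex.add_re, Complex.add_im, Complex.neg_re, Complex.neg_im, Complex.ofReal_re,
    Complex.ofReal_im, Complex.mul_re, Complex.mul_im, Complex.I_re, Complex.I_im]
  rw [mul_comm]
  congr 1
  · rw [← Real.cos_neg]; ring_nf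
  · ring_nf

lemma q_cont {d : ℕ} (hd : 1 ≤ d) {α a : ℝ} (hα : 0 < α) (ha : 0 < a) : Continuous (q d α a) := by
  refine continuous_of_dominated (bound := fun z => Real.exp (-a * ‖z‖ ^ α)) (fun x => by fun_prop)
    (fun x => Eventually.of_forall fun z => ?_) (integrable_f hd hα ha)
    (Eventually.of_forall fun z => by fun_prop)
  rw [norm_mul, Real.norm_eq_abs, Real.norm_eq_abs, abs_of_pos (Real.exp_pos _)]
  exact mul_le_of_le_one_left (Real.exp_pos _).le (Real.abs_cos_le_one _)

lemma q_fubini {d : ℕ} (hd : 1 ≤ d) {α a : ℝ} (hα : 0 < α) (ha : 0 < a) {δ : ℝ} (hδ : 0 < δ) :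
    ∫ x : E d, q d α a x * Real.exp (-δ * ‖x‖ ^ 2)
      = ∫ z : E d, Real.exp (-a * ‖z‖ ^ α) *
        ((π / δ) ^ ((d:ℝ) / 2) * Real.exp (-(1 / (4 * δ)) * ‖z‖ ^ 2)) := by
  have hswap : ∫ x : E d, ∫ z : E d, Real.cos ⟪x, z⟫ * Real.exp (-a * ‖z‖ ^ α) * Real.exp (-δ * ‖x‖ ^ 2)
      = ∫ z : E d, ∫ x : E d, Real.cos ⟪x, z⟫ * Real.exp (-a * ‖z‖ ^ α) * Real.exp (-δ * ‖x‖ ^ 2) := by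
    refine integral_integral_swap ?_
    refine ((integrable_gauss (d := d) hδ).mul_prod (integrable_f hd hα ha)).mono' ?_
      (Eventually.of_forall fun p => ?_)
    · have : Measurable (fun p : E d × E d => Real.cos ⟪p.1, p.2⟫ * Real.exp (-a * ‖p.2‖ ^ α) * Real.exp (-δ * ‖p.1‖ ^ 2)) := by
        fun_prop
      exact this.aestronglyMeasurable
    · simp only [Function.uncurry]
      rw [norm_mul, norm_mul]
      simp only [Real.norm_eq_abs, abs_of_pos (Real.exp_pos _)]
      calc _ ≤ 1 * Real.exp (-a * ‖p.2‖ ^ α) * Real.exp (-δ * ‖p.1‖ ^ 2) := by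
            gcongr
            exact Real.abs_cos_le_one _
        _ = _ := by ring
  simp only [q, ← integral_mul_const]
  rw [hswap]
  congr 1
  ext z
  rw [← fourier_gauss hδ z, ← integral_const_mul]
  congr 1
  ext x
  rw [real_inner_comm]; ring

lemma gauss_mass {d : ℕ} {δ : ℝ} (hδ : 0 < δ) :
    ∫ z : E d, (π / δ) ^ ((d:ℝ) / 2) * Real.exp (-(1 / (4 * δ)) * ‖z‖ ^ 2) = (2 * π) ^ d := by
  rw [integral_const_mul, GaussianFourier.integral_rexp_neg_mul_sq_norm (by positivity),
    finrank_euclideanSpace_fin, ← Real.mul_rpow (by positivity) (by positivity)]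
  have : π / δ * (π / (1 / (4 * δ))) = (2 * π) ^ 2 := by field_simp; ring
  rw [this, ← Real.rpow_natCast, ← Real.rpow_mul (by positivity), ← Real.rpow_natCast]
  congr 1; push_cast; ring

lemma gauss_moment {d : ℕ} {α R : ℝ} (hR : 0 < R) :
    ∫ z : E d, ‖z‖ ^ α * ((π / (R ^ 2)⁻¹) ^ ((d:ℝ) / 2) * Real.exp (-(1 / (4 * (R ^ 2)⁻¹)) * ‖z‖ ^ 2))
      = (π ^ ((d:ℝ) / 2) * ∫ z : E d, ‖z‖ ^ α * Real.exp (-(1 / 4) * ‖z‖ ^ 2)) / R ^ α := by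
  have e1 : (π / (R ^ 2)⁻¹) ^ ((d:ℝ) / 2) = π ^ ((d:ℝ) / 2) * R ^ d := by
    rw [div_inv_eq_mul, Real.mul_rpow (by positivity) (by positivity), ← Real.rpow_natCast R 2,
      ← Real.rpow_mul hR.le, ← Real.rpow_natCast R d]
    congr 2; push_cast; ring
  have hRα : R ^ α ≠ 0 := (Real.rpow_pos_of_pos hR _).ne'
  have e2 : ∀ z : E d, ‖z‖ ^ α * ((π / (R ^ 2)⁻¹) ^ ((d:ℝ) / 2) * Real.exp (-(1 / (4 * (R ^ 2)⁻¹)) * ‖z‖ ^ 2))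
      = (π ^ ((d:ℝ) / 2) * R ^ d / R ^ α) *
        (fun w : E d => ‖w‖ ^ α * Real.exp (-(1 / 4) * ‖w‖ ^ 2)) (R • z) := by
    intro z
    simp only [norm_smul, Real.norm_eq_abs, abs_of_pos hR]
    rw [Real.mul_rpow hR.le (norm_nonneg _), e1]
    have : (-(1 / (4 * (R ^ 2)⁻¹)) * ‖z‖ ^ 2) = (-(1 / 4) * (R * ‖z‖) ^ 2) := by field_simp
    rw [this]
    field_simp
  simp only [e2]
  rw [integral_const_mul]
  have e3 := Measure.integral_comp_smul_of_nonneg (volume : Measure (E d))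
    (fun w : E d => ‖w‖ ^ α * Real.exp (-(1 / 4) * ‖w‖ ^ 2)) R (hR := hR.le)
  beta_reduce at e3 ⊢
  rw [e3, finrank_euclideanSpace_fin, smul_eq_mul]
  field_simp

lemma main_bound {d : ℕ} (hd : 1 ≤ d) {α a R : ℝ} (hα : 0 < α) (hα2 : α ≤ 2) (ha : 0 < a) (hR : 0 < R)
    (hi : Integrable (q d α a)) :
    ∫ x : E d, q d α a x * (1 - Real.exp (-(R ^ 2)⁻¹ * ‖x‖ ^ 2)) ≤
      a * ((π ^ ((d:ℝ) / 2) * ∫ z : E d, ‖z‖ ^ α * Real.exp (-(1 / 4) * ‖z‖ ^ 2)) / R ^ α) := by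
  have hη : 0 < (R ^ 2)⁻¹ := by positivity
  set η := (R ^ 2)⁻¹ with hηd
  have hle1 : ∀ δ > (0:ℝ), ∀ x : E d, Real.exp (-δ * ‖x‖ ^ 2) ≤ 1 := by
    intro δ hδ x
    refine Real.exp_le_one_iff.2 ?_
    have : 0 ≤ δ * ‖x‖ ^ 2 := by positivity
    linarith
  have hqi : ∀ δ > (0:ℝ), Integrable (fun x => q d α a x * Real.exp (-δ * ‖x‖ ^ 2)) := by
    intro δ hδ
    refine hi.mono ((q_cont hd hα ha).measurable.aestronglyMeasurable.mul (by fun_prop))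
      (Eventually.of_forall fun x => ?_)
    rw [norm_mul, Real.norm_eq_abs (Real.exp _), abs_of_pos (Real.exp_pos _)]
    exact mul_le_of_le_one_right (norm_nonneg _) (hle1 δ hδ x)
  have hf1 : ∀ z : E d, Real.exp (-a * ‖z‖ ^ α) ≤ 1 := by
    intro z
    refine Real.exp_le_one_iff.2 ?_
    have : 0 ≤ a * ‖z‖ ^ α := by positivity
    linarith
  have hGi : ∀ δ > (0:ℝ), Integrable (fun z : E d => (π / δ) ^ ((d:ℝ) / 2) * Real.exp (-(1 / (4 * δ)) * ‖z‖ ^ 2)) :=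
    fun δ hδ => (integrable_gauss (by positivity)).const_mul _
  have hfGi : ∀ δ > (0:ℝ), Integrable (fun z : E d => Real.exp (-a * ‖z‖ ^ α) * ((π / δ) ^ ((d:ℝ) / 2) * Real.exp (-(1 / (4 * δ)) * ‖z‖ ^ 2))) := by
    intro δ hδ
    refine (hGi δ hδ).mono' (by fun_prop) (Eventually.of_forall fun z => ?_)
    rw [Real.norm_eq_abs, abs_of_nonneg (by positivity)]
    exact mul_le_of_le_one_left (by positivity) (hf1 z)
  have hstep : ∀ δ > (0:ℝ), ∫ x : E d, q d α a x * Real.exp (-δ * ‖x‖ ^ 2) ≤ (2 * π) ^ d := by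
    intro δ hδ
    rw [q_fubini hd hα ha hδ, ← gauss_mass hδ]
    exact integral_mono (hfGi δ hδ) (hGi δ hδ) fun z => mul_le_of_le_one_left (by positivity) (hf1 z)
  have htot : ∫ x : E d, q d α a x ≤ (2 * π) ^ d := by
    have hlim : Tendsto (fun n : ℕ => ∫ x : E d, q d α a x * Real.exp (-(1 / ((n:ℝ) + 1)) * ‖x‖ ^ 2)) atTop
        (𝓝 (∫ x : E d, q d α a x)) := by
      refine tendsto_integral_of_dominated_convergence (fun x => ‖q d α a x‖)
        (fun n => (hqi _ (by positivity)).1) hi.norm (fun n => Eventually.of_forall fun x => ?_)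
        (Eventually.of_forall fun x => ?_)
      · rw [norm_mul, Real.norm_eq_abs (Real.exp _), abs_of_pos (Real.exp_pos _)]
        exact mul_le_of_le_one_right (norm_nonneg _) (hle1 _ (by positivity) x)
      · have := (Real.continuous_exp.tendsto _).comp
          ((tendsto_one_div_add_atTop_nhds_zero_nat (𝕜 := ℝ)).neg.mul_const (‖x‖ ^ 2))
        simpa [Function.comp_def] using this.const_mul (q d α a x)
    exact le_of_tendsto hlim (Eventually.of_forall fun n => hstep _ (by positivity))
  have hHi : Integrable (fun z : E d => a * (‖z‖ ^ α * ((π / η) ^ ((d:ℝ) / 2) * Real.exp (-(1 / (4 * η)) * ‖z‖ ^ 2)))) := by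
    have := ((integrable_H hd (a := 1 / (4 * η)) hα (by positivity)).const_mul ((π / η) ^ ((d:ℝ) / 2))).const_mul a
    refine this.congr (Eventually.of_forall fun z => ?_)
    ring
  rw [← gauss_moment hR, ← integral_const_mul, ← hηd]
  calc ∫ x : E d, q d α a x * (1 - Real.exp (-η * ‖x‖ ^ 2))
      = (∫ x : E d, q d α a x) - ∫ x : E d, q d α a x * Real.exp (-η * ‖x‖ ^ 2) := by
        rw [← integral_sub hi (hqi η hη)]; simp only [mul_sub, mul_one]
    _ ≤ (2 * π) ^ d - ∫ x : E d, q d α a x * Real.exp (-η * ‖x‖ ^ 2) := by gcongr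
    _ = ∫ z : E d, ((π / η) ^ ((d:ℝ) / 2) * Real.exp (-(1 / (4 * η)) * ‖z‖ ^ 2)
          - Real.exp (-a * ‖z‖ ^ α) * ((π / η) ^ ((d:ℝ) / 2) * Real.exp (-(1 / (4 * η)) * ‖z‖ ^ 2))) := by
        rw [integral_sub (hGi η hη) (hfGi η hη), gauss_mass hη, q_fubini hd hα ha hη]
    _ ≤ _ := by
        refine integral_mono ((hGi η hη).sub (hfGi η hη)) hHi fun z => ?_
        have h1 : 1 - Real.exp (-a * ‖z‖ ^ α) ≤ a * ‖z‖ ^ α := by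
          have := Real.add_one_le_exp (-a * ‖z‖ ^ α); linarith
        have h2 : 0 ≤ (π / η) ^ ((d:ℝ) / 2) * Real.exp (-(1 / (4 * η)) * ‖z‖ ^ 2) := by positivity
        have := mul_le_mul_of_nonneg_right h1 h2
        beta_reduce
        linarith

lemma tail_bound {d : ℕ} (hd : 1 ≤ d) {α a R : ℝ} (hα : 0 < α) (hα2 : α ≤ 2) (ha : 0 < a) (hR : 0 < R) :
    ∫ x in (Metric.ball (0 : E d) R)ᶜ, q d α a x ≤ (1 - Real.exp (-1))⁻¹ *
      (a * ((π ^ ((d:ℝ) / 2) * ∫ z : E d, ‖z‖ ^ α * Real.exp (-(1 / 4) * ‖z‖ ^ 2)) / R ^ α)) := by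
  have he : 0 < 1 - Real.exp (-1) := by
    have : Real.exp (-1) < 1 := by rw [← Real.exp_zero]; exact Real.exp_lt_exp.2 (by norm_num)
    linarith
  have hmom : 0 ≤ ∫ z : E d, ‖z‖ ^ α * Real.exp (-(1 / 4) * ‖z‖ ^ 2) :=
    integral_nonneg fun z => by positivity
  have hq0 : ∀ x, 0 ≤ q d α a x := fun x => cos_f_nonneg hd hα hα2 ha x
  by_cases hi : IntegrableOn (q d α a) (Metric.ball (0 : E d) R)ᶜ
  swap
  · rw [integral_undef hi]; positivity
  have hball : IntegrableOn (q d α a) (Metric.ball (0 : E d) R) :=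
    ((q_cont hd hα ha).continuousOn.integrableOn_compact (isCompact_closedBall 0 R)).mono_set
      Metric.ball_subset_closedBall
  have hI : Integrable (q d α a) := by
    have := hball.union hi
    rwa [Set.union_compl_self, integrableOn_univ] at this
  have hexp : ∀ x : E d, Real.exp (-(R ^ 2)⁻¹ * ‖x‖ ^ 2) ≤ 1 := by
    intro x
    refine Real.exp_le_one_iff.2 ?_
    have : 0 ≤ (R ^ 2)⁻¹ * ‖x‖ ^ 2 := by positivity
    linarith
  have hI2 : Integrable (fun x => q d α a x * (1 - Real.exp (-(R ^ 2)⁻¹ * ‖x‖ ^ 2))) := by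
    refine hI.mono ((q_cont hd hα ha).measurable.aestronglyMeasurable.mul (by fun_prop))
      (Eventually.of_forall fun x => ?_)
    rw [norm_mul]
    refine mul_le_of_le_one_right (norm_nonneg _) ?_
    rw [Real.norm_eq_abs, abs_of_nonneg (by linarith [hexp x])]
    linarith [Real.exp_pos (-(R ^ 2)⁻¹ * ‖x‖ ^ 2)]
  rw [inv_mul_eq_div, le_div_iff₀ he, ← integral_mul_const]
  refine le_trans ?_ (main_bound hd hα hα2 ha hR hI)
  refine le_trans ?_ (setIntegral_le_integral (s := (Metric.ball (0 : E d) R)ᶜ) hI2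
    (Eventually.of_forall fun x => mul_nonneg (hq0 x) (by linarith [hexp x])))
  refine setIntegral_mono_on (hi.mul_const _) hI2.integrableOn Metric.isOpen_ball.measurableSet.compl fun x hx => ?_
  refine mul_le_mul_of_nonneg_left ?_ (hq0 x)
  have hx' : R ≤ ‖x‖ := by simpa using hx
  gcongr
  have : 1 ≤ (R ^ 2)⁻¹ * ‖x‖ ^ 2 := by
    rw [inv_mul_eq_div, one_le_div (by positivity)]
    gcongr
  linarith

end StableAux

/-- Tail mass estimate: there is `c > 0` with `∫_{B(0,R)ᶜ} p_t(y) dy ≤ c t / R^α`. -/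
theorem stableKernel_tail_mass (d : ℕ) (hd : 1 ≤ d) (ν α : ℝ) (hν : 0 < ν)
    (hα : 0 < α) (hα2 : α ≤ 2) :
    ∃ c > (0 : ℝ), ∀ (t : ℝ), 0 < t → ∀ (R : ℝ), 0 < R →
      (∫ y in (Metric.ball (0 : EuclideanSpace ℝ (Fin d)) R)ᶜ, stableKernel d ν α t y)
        ≤ c * t / R ^ α := by
  have he : 0 < 1 - Real.exp (-1) := by
    have : Real.exp (-1) < 1 := by rw [← Real.exp_zero]; exact Real.exp_lt_exp.2 (by norm_num)
    linarith
  have hmom : 0 ≤ ∫ z : EuclideanSpace ℝ (Fin d), ‖z‖ ^ α * Real.exp (-(1 / 4) * ‖z‖ ^ 2) :=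
    integral_nonneg fun z => by positivity
  set I := ∫ z : EuclideanSpace ℝ (Fin d), ‖z‖ ^ α * Real.exp (-(1 / 4) * ‖z‖ ^ 2) with hI
  refine ⟨((2 * π) ^ d)⁻¹ * ((1 - Real.exp (-1))⁻¹ * (ν * (π ^ ((d:ℝ) / 2) * I))) + 1,
    by positivity, fun t ht R hR => ?_⟩
  have hb := StableAux.tail_bound hd hα hα2 (mul_pos ht hν) hR
  rw [← hI] at hb
  have hRα : 0 < R ^ α := Real.rpow_pos_of_pos hR _
  simp only [StableAux.kernel_eq d hd hν hα ht]
  rw [integral_const_mul]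
  have hK : 0 ≤ ((2 * π) ^ d)⁻¹ := by positivity
  refine (mul_le_mul_of_nonneg_left hb hK).trans ?_
  have h1 : 0 ≤ t / R ^ α := by positivity
  calc _ = ((2 * π) ^ d)⁻¹ * ((1 - Real.exp (-1))⁻¹ * (ν * (π ^ ((d:ℝ) / 2) * I))) * (t / R ^ α) := by ring
    _ ≤ (((2 * π) ^ d)⁻¹ * ((1 - Real.exp (-1))⁻¹ * (ν * (π ^ ((d:ℝ) / 2) * I))) + 1) * (t / R ^ α) := by
        gcongr; linarith
    _ = _ := by ring
end

section
/- Let d ≥ 1, α > 0 and 0 < β < d. Then the double integral ∫_{{y ∈ ℝ^d : |y| ≥ 1}} ∫_{{w ∈ ℝ^d : |w| ≥ 1}} |y|^{−(d+α)} |w|^{−(d+α)} |y−w|^{−β} dw dy is finite. -/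
open MeasureTheory Real

/-- Finiteness of the double integral
`∫_{|y|≥1} ∫_{|w|≥1} |y|^{-(d+α)} |w|^{-(d+α)} |y-w|^{-β} dw dy < ∞`
for `d ≥ 1`, `α > 0` and `0 < β < d`. -/
theorem riesz_double_integral_finite (d : ℕ) (hd : 1 ≤ d) (α β : ℝ)
    (hα : 0 < α) (hβ : 0 < β) (hβd : β < d) :
    IntegrableOn
      (fun yw : EuclideanSpace ℝ (Fin d) × EuclideanSpace ℝ (Fin d) =>
        ‖yw.1‖ ^ (-((d : ℝ) + α)) * ‖yw.2‖ ^ (-((d : ℝ) + α)) * ‖yw.1 - yw.2‖ ^ (-β))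
      ({y : EuclideanSpace ℝ (Fin d) | 1 ≤ ‖y‖} ×ˢ
        {w : EuclideanSpace ℝ (Fin d) | 1 ≤ ‖w‖}) := by
  set r : ℝ := (d : ℝ) + α with hr
  have hr0 : 0 < r := by positivity
  let G : EuclideanSpace ℝ (Fin d) → ℝ := fun y => 2 ^ r * (1 + ‖y‖) ^ (-r)
  let h : EuclideanSpace ℝ (Fin d) → ℝ :=
    (Metric.ball 0 1).indicator (fun z => ‖z‖ ^ (-β))
  have hG : Integrable G := by
    refine (integrable_one_add_norm ?_).const_mul _
    simp [hr, hα]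
  have hh : Integrable h := by
    rw [integrable_indicator_iff Metric.isOpen_ball.measurableSet]
    refine integrableOn_ball_of_norm_le_rpow (C := 1) (α := β) ?_ ?_ ?_ ?_
    · simpa using hd
    · simpa using hβd
    · refine Filter.Eventually.of_forall fun z => ?_
      rw [one_mul, Real.norm_of_nonneg (by positivity)]
    · exact (measurable_norm.pow_const _).aestronglyMeasurable
  have h1 : Integrable (fun p : EuclideanSpace ℝ (Fin d) × EuclideanSpace ℝ (Fin d) =>
      G p.2 * h (p.1 - p.2)) := by
    exact hG.convolution_integrand (ContinuousLinearMap.mul ℝ ℝ) hh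
  have h2 : Integrable (fun p : EuclideanSpace ℝ (Fin d) × EuclideanSpace ℝ (Fin d) =>
      G p.1 * G p.2) := hG.mul_prod hG
  have hGb : ∀ y : EuclideanSpace ℝ (Fin d), 1 ≤ ‖y‖ → ‖y‖ ^ (-r) ≤ G y := by
    intro y hy
    have : ‖y‖ ^ (-r) = 2 ^ r * (2 * ‖y‖) ^ (-r) := by
      rw [Real.mul_rpow (by norm_num) (by positivity), ← mul_assoc,
        ← Real.rpow_add (by norm_num)]
      simp
    rw [this]
    refine mul_le_mul_of_nonneg_left ?_ (by positivity)
    exact Real.rpow_le_rpow_of_nonpos (by positivity) (by linarith) (by linarith)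
  refine Integrable.mono' (h1.add h2).integrableOn ?_ ?_
  · exact Measurable.aestronglyMeasurable (by fun_prop)
  · refine (ae_restrict_iff' ?_).2 (Filter.Eventually.of_forall ?_)
    · exact (measurableSet_le measurable_const measurable_norm).prod
        (measurableSet_le measurable_const measurable_norm)
    rintro ⟨y, w⟩ ⟨hy, hw⟩
    simp only [Set.mem_ofPred_eq] at hy hw
    rw [Real.norm_of_nonneg (by positivity)]
    simp only [Pi.add_apply]
    have e1 := hGb y hy
    have e2 := hGb w hw
    have e3 : ‖y‖ ^ (-r) ≤ 1 := Real.rpow_le_one_of_one_le_of_nonpos hy (by linarith)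
    have p1 : 0 ≤ ‖y‖ ^ (-r) := by positivity
    have p2 : 0 ≤ ‖w‖ ^ (-r) := by positivity
    have p3 : 0 ≤ ‖y - w‖ ^ (-β) := by positivity
    by_cases hz : y - w ∈ Metric.ball (0 : EuclideanSpace ℝ (Fin d)) 1
    · have : h (y - w) = ‖y - w‖ ^ (-β) := Set.indicator_of_mem hz _
      rw [this]
      have q1 : ‖y‖ ^ (-r) * ‖w‖ ^ (-r) ≤ G w := by nlinarith
      have q2 : 0 ≤ G y * G w := mul_nonneg (p1.trans e1) (p2.trans e2)
      have := mul_le_mul_of_nonneg_right q1 p3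
      linarith
    · have : h (y - w) = 0 := Set.indicator_of_notMem hz _
      rw [this]
      have hz' : 1 ≤ ‖y - w‖ := by simpa using hz
      have e4 : ‖y - w‖ ^ (-β) ≤ 1 :=
        Real.rpow_le_one_of_one_le_of_nonpos hz' (by linarith)
      have q1 : ‖y‖ ^ (-r) * ‖w‖ ^ (-r) ≤ G y * G w :=
        mul_le_mul e1 e2 p2 (p1.trans e1)
      have := mul_le_of_le_one_right (mul_nonneg p1 p2) e4
      linarith
end

section
/- Let (Ω, ℱ, P) be a probability space and X ≥ 0 a random variable. Let 0 < β < α, A, ū, ν, t > 0, and suppose that for every real k ≥ 2 one has 𝔼[X^k] ≤ A^k ū^k exp(A k^{(2α−β)/(α−β)} ν^{−β/(α−β)} t). Then for every λ > 0 such that k* := [ (ν^{β/(α−β)}/(A t)) · ((α−β)/(2α−β)) · log(λ/(A ū)) ]^{(α−β)/α} ≥ 2, one has P(X > λ) ≤ exp( − c_{A,α,β} ν^{β/α} t^{−(α−β)/α} (log(λ/(A ū)))^{(2α−β)/α} ), where c_{A,α,β} := (α/(2α−β)) · [ (1/A) · ((α−β)/(2α−β)) ]^{(α−β)/α}. -/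
open MeasureTheory Real

/-- Abstract upper tail estimate (Lemma 4.1): if a nonnegative random variable `X`
satisfies `𝔼[X^k] ≤ A^k ū^k exp(A k^{(2α-β)/(α-β)} ν^{-β/(α-β)} t)` for all real `k ≥ 2`,
then for every `λ > 0` whose optimizing exponent `k*` is at least `2`,
`P(X > λ) ≤ exp(-c_{A,α,β} ν^{β/α} t^{-(α-β)/α} (log(λ/(Aū)))^{(2α-β)/α})`. -/
theorem upper_tail_estimate {Ω : Type*} [MeasurableSpace Ω] (μ : Measure Ω)
    [IsProbabilityMeasure μ] (X : Ω → ℝ) (hXm : Measurable X) (hX : ∀ ω, 0 ≤ X ω)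
    (α β A ubar ν t : ℝ) (hβ : 0 < β) (hβα : β < α) (hA : 0 < A) (hu : 0 < ubar)
    (hν : 0 < ν) (ht : 0 < t)
    (hmom : ∀ k : ℝ, 2 ≤ k →
      (∫⁻ ω, ENNReal.ofReal (X ω ^ k) ∂μ)
        ≤ ENNReal.ofReal (A ^ k * ubar ^ k *
            Real.exp (A * k ^ ((2 * α - β) / (α - β)) * ν ^ (-(β / (α - β))) * t)))
    (lam : ℝ) (hlam : 0 < lam)
    (hkstar : 2 ≤ ((ν ^ (β / (α - β)) / (A * t)) * ((α - β) / (2 * α - β)) *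
        Real.log (lam / (A * ubar))) ^ ((α - β) / α)) :
    μ {ω | lam < X ω}
      ≤ ENNReal.ofReal (Real.exp (-((α / (2 * α - β)) *
          ((1 / A) * ((α - β) / (2 * α - β))) ^ ((α - β) / α) *
          ν ^ (β / α) * t ^ (-((α - β) / α)) *
          Real.log (lam / (A * ubar)) ^ ((2 * α - β) / α)))) := by
  have hα : 0 < α := hβ.trans hβα
  have hd : 0 < α - β := sub_pos.2 hβα
  have hp : 0 < 2 * α - β := by linarith
  have hy : 0 < (α - β) / α := div_pos hd hα
  have hy1 : (2 * α - β) / α = 1 + (α - β) / α := by field_simp; ring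
  rw [hy1]
  set L := Real.log (lam / (A * ubar)) with hL
  set y := (α - β) / α with hydef
  set q := (α - β) / (2 * α - β) with hq
  have hq0 : 0 < q := div_pos hd hp
  have hc0 : 0 < α / (2 * α - β) := div_pos hα hp
  have hνb : 0 < ν ^ (β / (α - β)) := Real.rpow_pos_of_pos hν _
  have hC : 0 < ν ^ (β / (α - β)) / (A * t) * q := by positivity
  rcases lt_trichotomy L 0 with h | h | h
  · have hB : ν ^ (β / (α - β)) / (A * t) * q * L < 0 := mul_neg_of_pos_of_neg hC h
    rw [Real.rpow_def_of_neg hB] at hkstar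
    have hcos : 0 ≤ Real.cos (y * π) := by
      by_contra hneg
      push Not at hneg
      have := mul_neg_of_pos_of_neg
        (Real.exp_pos (Real.log (ν ^ (β / (α - β)) / (A * t) * q * L) * y)) hneg
      linarith
    have hLneg : L ^ (1 + y) ≤ 0 := by
      rw [Real.rpow_def_of_neg h]
      have : (1 + y) * π = y * π + π := by ring
      rw [this, Real.cos_add_pi]
      have := mul_nonneg (Real.exp_pos (Real.log L * (1 + y))).le hcos
      linarith
    refine prob_le_one.trans ?_
    rw [← ENNReal.ofReal_one]
    apply ENNReal.ofReal_le_ofReal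
    apply Real.one_le_exp
    rw [neg_nonneg]
    apply mul_nonpos_of_nonneg_of_nonpos _ hLneg
    positivity
  · rw [h, mul_zero, Real.zero_rpow hy.ne'] at hkstar
    linarith
  · set B := ν ^ (β / (α - β)) / (A * t) * q * L with hBdef
    have hB : 0 < B := mul_pos hC h
    set k := B ^ y with hk
    have hk0 : 0 < k := by linarith
    have hkp : k ^ ((2 * α - β) / (α - β)) = k * B := by
      have e : (2 * α - β) / (α - β) = 1 + α / (α - β) := by field_simp; ring
      rw [e, Real.rpow_add hk0, Real.rpow_one, hk, ← Real.rpow_mul hB.le]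
      have : y * (α / (α - β)) = 1 := by rw [hydef]; field_simp
      rw [this, Real.rpow_one]
    have hE : A * k ^ ((2 * α - β) / (α - β)) * ν ^ (-(β / (α - β))) * t = k * q * L := by
      rw [hkp, Real.rpow_neg hν.le, hBdef]
      field_simp
    have hkval : k = (1 / A * q) ^ y * ν ^ (β / α) * t ^ (-y) * L ^ y := by
      have e : B = (1 / A * q) * ν ^ (β / (α - β)) * t⁻¹ * L := by
        rw [hBdef]; field_simp
      have hyb : β / (α - β) * y = β / α := by rw [hydef]; field_simp
      rw [hk, e, Real.mul_rpow (by positivity) h.le, Real.mul_rpow (by positivity) (by positivity),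
        Real.mul_rpow (by positivity) (by positivity), ← Real.rpow_mul hν.le, hyb,
        Real.inv_rpow ht.le, Real.rpow_neg ht.le]
    have hfin : -(α / (2 * α - β) * (1 / A * q) ^ y * ν ^ (β / α) * t ^ (-y) * L ^ (1 + y))
        = -(k * L) + k * q * L := by
      have e : α / (2 * α - β) = 1 - q := by
        rw [hq, eq_sub_iff_add_eq, ← add_div, div_eq_one_iff_eq hp.ne']; ring
      rw [Real.rpow_add h, Real.rpow_one, e, hkval]
      ring
    have hm := hmom k hkstar
    rw [hE] at hm
    have hlk : 0 < lam ^ k := Real.rpow_pos_of_pos hlam _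
    have hmeas : Measurable fun ω => ENNReal.ofReal (X ω ^ k) :=
      (hXm.pow_const k).ennreal_ofReal
    have hch := meas_ge_le_lintegral_div (μ := μ) hmeas.aemeasurable
      (ε := ENNReal.ofReal (lam ^ k)) (by simpa using hlk) ENNReal.ofReal_ne_top
    have hsub : {ω | lam < X ω} ⊆ {ω | ENNReal.ofReal (lam ^ k) ≤ ENNReal.ofReal (X ω ^ k)} := by
      intro ω hω
      exact ENNReal.ofReal_le_ofReal (Real.rpow_le_rpow hlam.le (le_of_lt hω) hk0.le)
    refine (measure_mono hsub).trans (hch.trans ((ENNReal.div_le_div_right hm _).trans ?_))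
    rw [← ENNReal.ofReal_div_of_pos hlk, hfin]
    apply ENNReal.ofReal_le_ofReal
    apply le_of_eq
    have hAu : 0 < A * ubar := mul_pos hA hu
    rw [Real.exp_add, ← Real.mul_rpow hA.le hu.le, mul_div_right_comm]
    congr 1
    rw [← Real.div_rpow hAu.le hlam.le, Real.rpow_def_of_pos (div_pos hAu hlam), hL,
      ← inv_div lam (A * ubar), Real.log_inv]
    congr 1
    ring
end

section
/- Let (Ω, ℱ, P) be a probability space and X ≥ 0 a random variable. Let 0 < β < α, A > 0, ν, t > 0, 0 < u ≤ ū, and k₀ ≥ 2, and suppose that for every real k ≥ k₀ one has (u/A)^k exp( k^{(2α−β)/(α−β)} ν^{−β/(α−β)} t / A ) ≤ 𝔼[X^k] ≤ A^k ū^k exp( A k^{(2α−β)/(α−β)} ν^{−β/(α−β)} t ). Then for every k ≥ k₀, setting λ := (u/(2A)) exp( t k^{α/(α−β)} ν^{−β/(α−β)} / A ), one has P(X ≥ λ) ≥ (1/4) exp( − c_{A,α,β} k^{(2α−β)/(α−β)} ν^{−β/(α−β)} t + k log(ũ⁴/A⁸) ), where c_{A,α,β} := 2^{(2α−β)/(α−β)}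 [ A·2^{(2α−β)/(α−β)} − 2/A ] and ũ := u/ū. -/
open MeasureTheory Real

theorem pz_aux {Ω : Type*} [MeasurableSpace Ω] (μ : Measure Ω)
    [IsProbabilityMeasure μ] (Y : Ω → ℝ) (hYm : Measurable Y)
    (L m q : ℝ) (hL0 : 0 ≤ L) (hL : L ≤ m / 2) (hm : 0 < m) (hq : 0 < q)
    (h1 : ENNReal.ofReal m ≤ ∫⁻ ω, ENNReal.ofReal (Y ω) ∂μ)
    (h2 : ∫⁻ ω, ENNReal.ofReal (Y ω ^ 2) ∂μ ≤ ENNReal.ofReal q) :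
    ENNReal.ofReal (m ^ 2 / (4 * q)) ≤ μ {ω | L ≤ Y ω} := by
  set S := {ω | L ≤ Y ω} with hS
  have hSm : MeasurableSet S := measurableSet_le measurable_const hYm
  obtain ⟨c, hc⟩ : ∃ c, c = m / (4 * q) := ⟨_, rfl⟩
  have hc0 : 0 < c := by rw [hc]; positivity
  have key : ∫⁻ ω, ENNReal.ofReal (Y ω) ∂μ ≤
      ENNReal.ofReal L + ENNReal.ofReal c * (∫⁻ ω, ENNReal.ofReal (Y ω ^ 2) ∂μ)
        + ENNReal.ofReal (1 / (4 * c)) * μ S := by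
    calc ∫⁻ ω, ENNReal.ofReal (Y ω) ∂μ
        ≤ ∫⁻ ω, ((ENNReal.ofReal L + ENNReal.ofReal c * ENNReal.ofReal (Y ω ^ 2))
            + S.indicator (fun _ => ENNReal.ofReal (1 / (4 * c))) ω) ∂μ := by
          apply lintegral_mono
          intro ω
          by_cases h : ω ∈ S
          · simp only [Set.indicator_of_mem h]
            rw [← ENNReal.ofReal_mul hc0.le, ← ENNReal.ofReal_add hL0 (by positivity),
              ← ENNReal.ofReal_add (by positivity) (by positivity)]
            apply ENNReal.ofReal_le_ofReal
            have e : c * Y ω ^ 2 + 1 / (4 * c) - Y ω = (2 * c * Y ω - 1) ^ 2 / (4 * c) := by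
              field_simp
              ring
            have e2 : 0 ≤ (2 * c * Y ω - 1) ^ 2 / (4 * c) := by positivity
            linarith
          · have h' : Y ω < L := not_le.mp h
            refine le_trans (ENNReal.ofReal_le_ofReal h'.le) ?_
            beta_reduce
            rw [add_assoc]
            exact le_self_add
      _ = _ := by
          rw [lintegral_add_right _ (measurable_const.indicator hSm),
            lintegral_add_left measurable_const, lintegral_const_mul _ (by fun_prop),
            lintegral_indicator_const hSm]
          simp
  have hfin : μ S ≠ ⊤ := measure_ne_top _ _
  have k2 : ENNReal.ofReal m ≤ ENNReal.ofReal (L + c * q + 1 / (4 * c) * (μ S).toReal) := by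
    rw [ENNReal.ofReal_add (by positivity) (by positivity),
      ENNReal.ofReal_add hL0 (by positivity), ENNReal.ofReal_mul hc0.le,
      ENNReal.ofReal_mul (by positivity), ENNReal.ofReal_toReal hfin]
    refine h1.trans (key.trans ?_)
    gcongr
  rw [ENNReal.ofReal_le_ofReal_iff (by positivity)] at k2
  rw [← ENNReal.ofReal_toReal hfin]
  apply ENNReal.ofReal_le_ofReal
  have e1 : c * q = m / 4 := by rw [hc]; field_simp
  have e2 : 1 / (4 * c) * (μ S).toReal = (μ S).toReal * q / m := by rw [hc]; field_simp
  rw [e1, e2] at k2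
  have k3 : m / 4 ≤ (μ S).toReal * q / m := by linarith
  rw [le_div_iff₀ hm] at k3
  rw [div_le_iff₀ (by positivity)]
  linarith

/-- Abstract lower tail estimate (Lemma 4.2, inequality (aux1)): if a nonnegative random
variable `X` satisfies the two-sided moment bounds
`(u/A)^k exp(k^{(2α-β)/(α-β)} ν^{-β/(α-β)} t / A) ≤ 𝔼[X^k] ≤ A^k ū^k exp(A k^{(2α-β)/(α-β)} ν^{-β/(α-β)} t)`
for all real `k ≥ k₀`, then for each `k ≥ k₀` and `λ := (u/(2A)) exp(t k^{α/(α-β)} ν^{-β/(α-β)}/A)`,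
`P(X ≥ λ) ≥ (1/4) exp(-c_{A,α,β} k^{(2α-β)/(α-β)} ν^{-β/(α-β)} t + k log(ũ⁴/A⁸))`, where
`c_{A,α,β} = 2^{(2α-β)/(α-β)}[A 2^{(2α-β)/(α-β)} - 2/A]` and `ũ = u/ū`. -/
theorem lower_tail_estimate {Ω : Type*} [MeasurableSpace Ω] (μ : Measure Ω)
    [IsProbabilityMeasure μ] (X : Ω → ℝ) (hXm : Measurable X) (hX : ∀ ω, 0 ≤ X ω)
    (α β A u ubar ν t k₀ : ℝ) (hβ : 0 < β) (hβα : β < α) (hA : 0 < A)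
    (hu : 0 < u) (huu : u ≤ ubar) (hν : 0 < ν) (ht : 0 < t) (hk₀ : 2 ≤ k₀)
    (hmom : ∀ k : ℝ, k₀ ≤ k →
      ENNReal.ofReal ((u / A) ^ k *
          Real.exp (k ^ ((2 * α - β) / (α - β)) * ν ^ (-(β / (α - β))) * t / A))
        ≤ (∫⁻ ω, ENNReal.ofReal (X ω ^ k) ∂μ) ∧
      (∫⁻ ω, ENNReal.ofReal (X ω ^ k) ∂μ)
        ≤ ENNReal.ofReal (A ^ k * ubar ^ k *
            Real.exp (A * k ^ ((2 * α - β) / (α - β)) * ν ^ (-(β / (α - β))) * t))) :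
    ∀ k : ℝ, k₀ ≤ k →
      ENNReal.ofReal ((1 / 4) * Real.exp
          (-(2 ^ ((2 * α - β) / (α - β)) * (A * 2 ^ ((2 * α - β) / (α - β)) - 2 / A)) *
              k ^ ((2 * α - β) / (α - β)) * ν ^ (-(β / (α - β))) * t
            + k * Real.log ((u / ubar) ^ 4 / A ^ 8)))
        ≤ μ {ω | (u / (2 * A)) *
            Real.exp (t * k ^ (α / (α - β)) * ν ^ (-(β / (α - β))) / A) ≤ X ω} := by
  intro k hk
  have hd : 0 < α - β := sub_pos.mpr hβα
  have hk2 : 2 ≤ k := hk₀.trans hk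
  have hk0 : 0 < k := by linarith
  have hub : 0 < ubar := hu.trans_le huu
  have hpe : (2 * α - β) / (α - β) = α / (α - β) + 1 := by field_simp; ring
  have hr : 0 < α / (α - β) := div_pos (hβ.trans hβα) hd
  have H1 := (hmom (2 * k) (by linarith)).1
  have H2 := (hmom (4 * k) (by linarith)).2
  clear hmom
  rw [hpe] at H1 H2 ⊢
  generalize α / (α - β) = r at *
  have hN : 0 < ν ^ (-(β / (α - β))) := rpow_pos_of_pos hν _
  generalize ν ^ (-(β / (α - β))) = N at *
  rw [mul_rpow (by norm_num) hk0.le] at H1 H2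
  have h4 : (4:ℝ) ^ (r + 1) = 2 ^ (r + 1) * 2 ^ (r + 1) := by
    rw [← mul_rpow (by norm_num) (by norm_num)]; norm_num
  rw [h4] at H2
  have hT : (2:ℝ) ≤ 2 ^ (r + 1) := by
    simpa using rpow_le_rpow_of_exponent_le (x := (2:ℝ)) (by norm_num)
      (show (1:ℝ) ≤ r + 1 by linarith)
  generalize (2:ℝ) ^ (r + 1) = T at *
  have hKr : k ^ (r + 1) = k ^ r * k := rpow_add_one hk0.ne' r
  rw [hKr] at H1 H2 ⊢
  have hK : 0 < k ^ r := rpow_pos_of_pos hk0 _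
  generalize k ^ r = K at *
  set lam := u / (2 * A) * Real.exp (t * K * N / A) with hlam
  have hlam0 : 0 < lam := by positivity
  have hset : {ω | lam ≤ X ω} = {ω | lam ^ (2 * k) ≤ X ω ^ (2 * k)} := by
    ext ω
    exact (rpow_le_rpow_iff hlam0.le (hX ω) (by linarith)).symm
  rw [hset]
  have hsq : ∀ ω, X ω ^ (4 * k) = (X ω ^ (2 * k)) ^ 2 := by
    intro ω
    rw [← rpow_natCast, ← rpow_mul (hX ω)]
    congr 1
    push_cast
    ring
  simp only [hsq] at H2
  refine le_trans (ENNReal.ofReal_le_ofReal (le_of_eq ?_))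
    (pz_aux μ (fun ω => X ω ^ (2 * k)) (hXm.pow_const _) (lam ^ (2 * k)) _ _
      (by positivity) ?_ (by positivity) (by positivity) H1 H2)
  · have hx : ∀ x : ℝ, 0 < x → ∀ y : ℝ, x ^ y = Real.exp (Real.log x * y) :=
      fun x hx y => rpow_def_of_pos hx y
    rw [hx (u / A) (by positivity), hx A hA, hx ubar hub,
      Real.log_div (by positivity) (by positivity), Real.log_div hu.ne' hA.ne',
      Real.log_pow, Real.log_pow, Real.log_div hu.ne' hub.ne', ← Real.exp_add, ← Real.exp_add,
      ← Real.exp_add, ← Real.exp_nat_mul, mul_comm (4:ℝ), ← div_div, ← Real.exp_sub,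
      mul_comm, mul_one_div]
    congr 2
    push_cast
    field_simp
    ring
  · have e : lam = (1 / 2) * ((u / A) * Real.exp (t * K * N / A)) := by
      rw [hlam]; field_simp
    rw [e, mul_rpow (by norm_num) (by positivity), mul_rpow (by positivity) (by positivity),
      ← Real.exp_mul]
    have g1 : ((1:ℝ) / 2) ^ (2 * k) ≤ 1 / 2 := by
      simpa using rpow_le_rpow_of_exponent_ge (x := (1:ℝ) / 2) (by norm_num) (by norm_num)
        (show (1:ℝ) ≤ 2 * k by linarith)
    have g2 : Real.exp (t * K * N / A * (2 * k)) ≤ Real.exp (T * (K * k) * N * t / A) := by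
      apply Real.exp_le_exp.mpr
      have : t * K * N / A * (2 * k) = 2 * (K * k * N * t / A) := by ring
      rw [this]
      have : T * (K * k) * N * t / A = T * (K * k * N * t / A) := by ring
      rw [this]
      gcongr
    have g3 := mul_le_mul g1 (mul_le_mul_of_nonneg_left g2
      (show 0 ≤ (u / A) ^ (2 * k) by positivity)) (by positivity) (by norm_num)
    linarith
end

section
/- Let M > 0. For all R > 0 and t > 0, there exist constants 0 < c_R < 1 and 1 < m₀(t,R) < ∞ (with c_R depending on R, M, d, α, ν but not on t or m) such that for all m ≥ m₀: ∫_{B(0,R)} p_s(x−y) dy ≥ c_R for every pair (s,x) with t/(2m) ≤ s ≤ t/m and x ∈ B(0, R + M (t/m)^{1/α}). -/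
open MeasureTheory Real
open scoped RealInnerProductSpace

section skaux
open Filter Topology

lemma sk_choose_rec (b : ℝ) (k : ℕ) :
    ((k:ℝ)+1) * Ring.choose b (k+1) = (b - k) * Ring.choose b k := by
  have h1 := Ring.descPochhammer_eq_factorial_smul_choose b (k+1)
  have h0 := Ring.descPochhammer_eq_factorial_smul_choose b k
  rw [descPochhammer_succ_right, Polynomial.smeval_mul, h0] at h1
  simp [Polynomial.smeval_sub, Polynomial.smeval_X, Nat.factorial_succ, Polynomial.smeval_natCast] at h1
  have : (k.factorial : ℝ) ≠ 0 := by positivity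
  apply mul_left_cancel₀ this
  linarith

lemma sk_binom (b : ℝ) (h0 : 0 < b) (h1 : b ≤ 1) : ∃ c : ℕ → ℝ, (∀ k, 0 ≤ c k) ∧
    ∀ w : ℝ, 0 ≤ w → w < 1 → HasSum (fun k => c k * w ^ k) (1 - (1 - w) ^ b) := by
  refine ⟨fun k => (if k = 0 then 1 else 0) - (-1) ^ k * Ring.choose b k, ?_, ?_⟩
  · have key : ∀ k : ℕ, (-1:ℝ) ^ (k+1) * Ring.choose b (k+1) ≤ 0 := by
      intro k
      induction k with
      | zero => simp [h0.le]
      | succ k ih =>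
        have := sk_choose_rec b (k+1)
        have h2 : ((-1:ℝ) ^ (k+1+1) * Ring.choose b (k+1+1)) =
            (((k:ℝ)+1 - b)/(k+2)) * ((-1:ℝ) ^ (k+1) * Ring.choose b (k+1)) := by
          push_cast at this
          have h3 : (k:ℝ)+2 ≠ 0 := by positivity
          field_simp
          rw [pow_succ _ (k+1)]
          linear_combination (-(-1:ℝ) ^ (k+1)) * this
        rw [h2]
        apply mul_nonpos_of_nonneg_of_nonpos _ ih
        apply div_nonneg <;> linarith [(Nat.cast_nonneg k : (0:ℝ) ≤ k)]
    intro k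
    cases k with
    | zero => simp
    | succ k => have := key k; simp only [Nat.succ_ne_zero, if_false]; linarith
  · intro w hw0 hw1
    have h := (Real.one_add_rpow_hasFPowerSeriesOnBall_zero (a := b)).hasSum (y := -w) (by
      simp [hw0, abs_of_nonneg, hw1, ← ofReal_norm])
    simp only [binomialSeries_apply, zero_add] at h
    have h2 : HasSum (fun k : ℕ => if k = 0 then (1:ℝ) else 0) 1 := by
      simpa using hasSum_ite_eq (0:ℕ) (1:ℝ)
    have := h2.sub h
    rw [← sub_eq_add_neg] at this
    refine Eq.mp (congrArg (fun f : ℕ → ℝ => HasSum f _) (funext fun k => ?_)) this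
    rcases eq_or_ne k 0 with rfl | hk
    · simp
    · simp [hk, neg_pow w k]; ring

lemma sk_tendsto (b ν l : ℝ) (h0 : 0 < b) (hν : 0 < ν) (hl : 0 < l) :
    Tendsto (fun n : ℕ => (1 - (1 - exp (-((ν / n) ^ (1 / b) * l))) ^ b) ^ n) atTop
      (𝓝 (exp (-(ν * l ^ b)))) := by
  have hA : Tendsto (fun n : ℕ => (ν / n) ^ (1 / b)) atTop (𝓝 0) := by
    have := (tendsto_const_div_atTop_nhds_zero_nat ν).rpow_const (p := 1 / b) (Or.inr (by positivity))
    rwa [zero_rpow (by positivity)] at this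
  have hder : HasDerivAt (fun u : ℝ => - exp (-(u * l))) l 0 := by
    have := (((hasDerivAt_id (0:ℝ)).mul_const l).neg.exp).neg
    simpa using! this
  have hs := hder.tendsto_slope_zero
  have hA' : Tendsto (fun n : ℕ => (ν / n) ^ (1 / b)) atTop (𝓝[≠] 0) := by
    rw [tendsto_nhdsWithin_iff]
    refine ⟨hA, ?_⟩
    filter_upwards [eventually_gt_atTop 0] with n hn
    have : (0:ℝ) < n := by exact_mod_cast hn
    exact (by positivity : (0:ℝ) < (ν / n) ^ (1 / b)).ne'
  have h2 := ((hs.comp hA').rpow_const (p := b) (Or.inr h0.le)).const_mul ν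
  have := tendsto_one_add_pow_exp_of_tendsto (g := fun n : ℕ => - (1 - exp (-((ν / n) ^ (1 / b) * l))) ^ b) (t := -(ν * l ^ b)) (by
    refine h2.neg.congr' ?_
    filter_upwards [eventually_gt_atTop 0] with n hn
    have hn' : (0:ℝ) < n := by exact_mod_cast hn
    have hp : 0 < (ν / n) ^ (1 / b) := by positivity
    have he : exp (-((ν / n) ^ (1 / b) * l)) ≤ 1 := by
      rw [exp_le_one_iff]; have := mul_pos hp hl; linarith
    simp only [Function.comp, zero_add, zero_mul, neg_zero, exp_zero, smul_eq_mul]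
    rw [mul_rpow (by positivity) (by linarith), inv_rpow hp.le, ← rpow_mul (by positivity), one_div_mul_cancel h0.ne', rpow_one]
    rw [show -rexp (-((ν / n) ^ (1 / b) * l)) - -1 = 1 - rexp (-((ν / n) ^ (1 / b) * l)) by ring]
    field_simp)
  simpa [sub_eq_add_neg] using this

lemma sk_integrable (d : ℕ) (hd : 1 ≤ d) (ν α : ℝ) (hν : 0 < ν) (hα : 0 < α) :
    Integrable (fun z : EuclideanSpace ℝ (Fin d) => exp (-(ν * ‖z‖ ^ α))) := by
  have : Nonempty (Fin d) := ⟨⟨0, hd⟩⟩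
  have : Nontrivial (EuclideanSpace ℝ (Fin d)) := inferInstance
  rw [integrable_fun_norm_addHaar volume (f := fun r : ℝ => exp (-(ν * r ^ α)))]
  have := integrableOn_rpow_mul_exp_neg_mul_rpow (p := α) (s := ((d-1:ℕ):ℝ)) (b := ν) (by
    have : (0:ℝ) ≤ ((d-1:ℕ):ℝ) := Nat.cast_nonneg _
    linarith) hα hν
  simpa [rpow_natCast] using this

noncomputable def skT (d : ℕ) (g : EuclideanSpace ℝ (Fin d) → ℝ) (x : EuclideanSpace ℝ (Fin d)) : ℝ :=
  ∫ z, cos ⟪x, z⟫ * g z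

def skQ (d : ℕ) (g : EuclideanSpace ℝ (Fin d) → ℝ) : Prop :=
  (∀ x, 0 ≤ skT d g x) ∧ ∀ x y, ‖y‖ ^ 2 = ‖x‖ ^ 2 / 2 → skT d g y ^ 2 ≤ skT d g x * skT d g 0

lemma skT_tendsto (d : ℕ) (g : ℕ → EuclideanSpace ℝ (Fin d) → ℝ) (f G : EuclideanSpace ℝ (Fin d) → ℝ)
    (hm : ∀ n, Measurable (g n)) (hG : Integrable G) (hb : ∀ n z, |g n z| ≤ G z)
    (hl : ∀ z, z ≠ 0 → Tendsto (fun n => g n z) atTop (𝓝 (f z))) (hd : 1 ≤ d) (x) :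
    Tendsto (fun n => skT d (g n) x) atTop (𝓝 (skT d f x)) := by
  have : Nonempty (Fin d) := ⟨⟨0, hd⟩⟩
  have : Nontrivial (EuclideanSpace ℝ (Fin d)) := inferInstance
  unfold skT
  refine tendsto_integral_of_dominated_convergence G ?_ hG ?_ ?_
  · intro n
    have := hm n
    exact Measurable.aestronglyMeasurable (by fun_prop)
  · intro n
    refine Eventually.of_forall fun z => ?_
    rw [norm_mul, Real.norm_eq_abs, Real.norm_eq_abs]
    calc |cos ⟪x, z⟫| * |g n z| ≤ 1 * |g n z| := by
          gcongr; exact abs_cos_le_one _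
      _ ≤ G z := by rw [one_mul]; exact hb n z
  · have h0 : ∀ᵐ z : EuclideanSpace ℝ (Fin d), z ≠ 0 := by
      simp [ae_iff]
    filter_upwards [h0] with z hz
    exact (hl z hz).const_mul _

lemma skQ_lim (d : ℕ) (g : ℕ → EuclideanSpace ℝ (Fin d) → ℝ) (f G : EuclideanSpace ℝ (Fin d) → ℝ)
    (hm : ∀ n, Measurable (g n)) (hG : Integrable G) (hb : ∀ n z, |g n z| ≤ G z)
    (hl : ∀ z, z ≠ 0 → Tendsto (fun n => g n z) atTop (𝓝 (f z))) (hd : 1 ≤ d)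
    (hQ : ∀ n, skQ d (g n)) : skQ d f := by
  have hT := skT_tendsto d g f G hm hG hb hl hd
  refine ⟨fun x => ge_of_tendsto' (hT x) fun n => (hQ n).1 x, fun x y hxy => ?_⟩
  exact le_of_tendsto_of_tendsto' ((hT y).pow 2) ((hT x).mul (hT 0)) fun n => (hQ n).2 x y hxy

lemma sk_gauss_integrable (d : ℕ) (b : ℝ) (hb : 0 < b) :
    Integrable (fun z : EuclideanSpace ℝ (Fin d) => exp (-(b * ‖z‖ ^ 2))) := by
  have := (GaussianFourier.integrable_cexp_neg_mul_sq_norm_add (b := (b:ℂ)) (by simpa using hb) 0 (0 : EuclideanSpace ℝ (Fin d))).norm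
  refine this.congr (Eventually.of_forall fun z => ?_)
  simp [Complex.norm_exp, ← Complex.ofReal_pow]

lemma sk_gauss (d : ℕ) (b : ℝ) (hb : 0 < b) (x : EuclideanSpace ℝ (Fin d)) :
    skT d (fun z => exp (-(b * ‖z‖ ^ 2))) x = (π / b) ^ ((d:ℝ) / 2) * exp (-‖x‖ ^ 2 / (4 * b)) := by
  have h := GaussianFourier.integral_cexp_neg_mul_sq_norm_add (b := (b:ℂ)) (by simpa using hb) Complex.I x
  have hi := GaussianFourier.integrable_cexp_neg_mul_sq_norm_add (b := (b:ℂ)) (by simpa using hb) Complex.I x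
  have h2 := congrArg Complex.re h
  have h3 := integral_re hi
  simp only [RCLike.re_to_complex] at h3
  rw [← h3] at h2
  unfold skT
  have e1 : ∀ v : EuclideanSpace ℝ (Fin d), (Complex.exp (-(b:ℂ) * (‖v‖:ℂ) ^ 2 + Complex.I * (⟪x, v⟫ : ℝ))).re = cos ⟪x, v⟫ * exp (-(b * ‖v‖ ^ 2)) := by
    intro v
    rw [Complex.exp_re]
    simp [← Complex.ofReal_pow, mul_comm]
  simp only [e1] at h2
  rw [h2]
  have e2 : ((π:ℂ) / b) ^ ((Module.finrank ℝ (EuclideanSpace ℝ (Fin d)) : ℂ) / 2) * Complex.exp (Complex.I ^ 2 * ‖x‖ ^ 2 / (4 * b))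
     = (((π / b) ^ ((d:ℝ) / 2) * exp (-‖x‖ ^ 2 / (4 * b)) : ℝ) : ℂ) := by
    push_cast [Complex.ofReal_cpow (show 0 ≤ π / b by positivity)]
    simp
  rw [e2, Complex.ofReal_re]

lemma skQ_poly (d : ℕ) (e δ : ℝ) (he : 0 < e) (hδ : 0 ≤ δ) (P : Polynomial ℝ) (hP : ∀ k, 0 ≤ P.coeff k) :
    skQ d (fun z => exp (-(e * ‖z‖ ^ 2)) * P.eval (exp (-(δ * ‖z‖ ^ 2)))) := by
  have hpos : ∀ k : ℕ, 0 < e + k * δ := fun k => by positivity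
  have key : ∀ x, skT d (fun z => exp (-(e * ‖z‖ ^ 2)) * P.eval (exp (-(δ * ‖z‖ ^ 2)))) x =
      ∑ k ∈ Finset.range (P.natDegree + 1), P.coeff k *
        ((π / (e + k * δ)) ^ ((d:ℝ) / 2) * exp (-‖x‖ ^ 2 / (4 * (e + k * δ)))) := by
    intro x
    have : ∀ z : EuclideanSpace ℝ (Fin d), cos ⟪x, z⟫ * (exp (-(e * ‖z‖ ^ 2)) * P.eval (exp (-(δ * ‖z‖ ^ 2)))) =
        ∑ k ∈ Finset.range (P.natDegree + 1), P.coeff k * (cos ⟪x, z⟫ * exp (-((e + k * δ) * ‖z‖ ^ 2))) := by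
      intro z
      rw [Polynomial.eval_eq_sum_range, Finset.mul_sum, Finset.mul_sum]
      refine Finset.sum_congr rfl fun k _ => ?_
      rw [← exp_nat_mul, show -((e + k * δ) * ‖z‖ ^ 2) = -(e * ‖z‖ ^ 2) + k * (-(δ * ‖z‖ ^ 2)) by ring, exp_add]
      ring
    unfold skT
    simp only [this]
    rw [integral_finsetSum]
    · refine Finset.sum_congr rfl fun k _ => ?_
      rw [integral_const_mul, ← sk_gauss d _ (hpos k), skT]
    · intro k _
      refine Integrable.const_mul ?_ _
      refine (sk_gauss_integrable d _ (hpos k)).bdd_mul (c := 1) ?_ ?_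
      · exact Measurable.aestronglyMeasurable (by fun_prop)
      · exact Eventually.of_forall fun z => abs_cos_le_one _
  have nn : ∀ (x : EuclideanSpace ℝ (Fin d)) (k : ℕ), 0 ≤ P.coeff k *
        ((π / (e + k * δ)) ^ ((d:ℝ) / 2) * exp (-‖x‖ ^ 2 / (4 * (e + k * δ)))) := by
    intro x k
    have := hpos k
    have := hP k
    positivity
  refine ⟨fun x => ?_, fun x y hxy => ?_⟩
  · rw [key]
    exact Finset.sum_nonneg fun k _ => nn x k
  · rw [key, key, key]
    refine Finset.sum_sq_le_sum_mul_sum_of_sq_le_mul _ (fun k _ => nn x k) (fun k _ => nn 0 k) fun k _ => le_of_eq ?_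
    have e1 : exp (-‖y‖ ^ 2 / (4 * (e + k * δ))) ^ 2 = exp (-‖x‖ ^ 2 / (4 * (e + k * δ))) := by
      rw [← exp_nat_mul, neg_div, hxy]
      congr 1
      push_cast
      ring
    rw [mul_pow, mul_pow, e1]
    simp
    ring

lemma sk_coeff_pow (P : Polynomial ℝ) (hP : ∀ k, 0 ≤ P.coeff k) (n k : ℕ) : 0 ≤ (P ^ n).coeff k := by
  induction n generalizing k with
  | zero => rw [pow_zero, Polynomial.coeff_one]; split_ifs <;> norm_num
  | succ n ih =>
    rw [pow_succ, Polynomial.coeff_mul]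
    exact Finset.sum_nonneg fun p _ => mul_nonneg (ih _) (hP _)

lemma skQ_step1 (d : ℕ) (hd : 1 ≤ d) (e δ b : ℝ) (he : 0 < e) (hδ : 0 < δ) (hb : 0 < b) (hb1 : b ≤ 1) (n : ℕ) :
    skQ d (fun z => exp (-(e * ‖z‖ ^ 2)) * (1 - (1 - exp (-(δ * ‖z‖ ^ 2))) ^ b) ^ n) := by
  obtain ⟨c, hc, hs⟩ := sk_binom b hb hb1
  let P : ℕ → Polynomial ℝ := fun N => ∑ k ∈ Finset.range N, Polynomial.C (c k) * Polynomial.X ^ k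
  have hPe : ∀ N w, (P N).eval w = ∑ k ∈ Finset.range N, c k * w ^ k := by
    intro N w; simp [P, Polynomial.eval_finsetSum]
  have hPc : ∀ N k, 0 ≤ (P N).coeff k := by
    intro N k
    simp only [P, Polynomial.finsetSum_coeff, Polynomial.coeff_C_mul, Polynomial.coeff_X_pow]
    refine Finset.sum_nonneg fun i _ => mul_nonneg (hc i) ?_
    split_ifs <;> norm_num
  have hP0 : ∀ N w, 0 ≤ w → 0 ≤ (P N).eval w := by
    intro N w hw
    rw [hPe]
    exact Finset.sum_nonneg fun k _ => mul_nonneg (hc k) (pow_nonneg hw k)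
  have hP1 : ∀ N w, 0 ≤ w → w < 1 → (P N).eval w ≤ 1 := by
    intro N w hw hw1
    rw [hPe]
    have h1 := sum_le_hasSum (Finset.range N) (fun k _ => mul_nonneg (hc k) (pow_nonneg hw k)) (hs w hw hw1)
    have : 0 ≤ (1 - w) ^ b := rpow_nonneg (by linarith) _
    linarith
  have hP1' : ∀ N w, 0 ≤ w → w ≤ 1 → (P N).eval w ≤ 1 := by
    intro N w hw hw1
    rcases hw1.lt_or_eq with h | rfl
    · exact hP1 N w hw h
    · have ht : Tendsto (fun w => (P N).eval w) (𝓝[<] 1) (𝓝 ((P N).eval 1)) :=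
        (P N).continuous.continuousAt.tendsto.mono_left nhdsWithin_le_nhds
      refine le_of_tendsto ht ?_
      filter_upwards [Ioo_mem_nhdsLT (show (0:ℝ) < 1 by norm_num)] with w hw
      exact hP1 N w hw.1.le hw.2
  refine skQ_lim d (fun N z => exp (-(e * ‖z‖ ^ 2)) * ((P N) ^ n).eval (exp (-(δ * ‖z‖ ^ 2)))) _
    (fun z => exp (-(e * ‖z‖ ^ 2))) ?_ (sk_gauss_integrable d e he) ?_ ?_ hd ?_
  · intro N
    have : Continuous (fun z : EuclideanSpace ℝ (Fin d) => ((P N) ^ n).eval (exp (-(δ * ‖z‖ ^ 2)))) :=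
      ((P N) ^ n).continuous.comp (by fun_prop)
    exact Measurable.mul (by fun_prop) this.measurable
  · intro N z
    have hw1 : exp (-(δ * ‖z‖ ^ 2)) ≤ 1 := by rw [exp_le_one_iff]; have : 0 ≤ δ * ‖z‖ ^ 2 := by positivity
                                              linarith
    have h0 := hP0 N _ (exp_pos (-(δ * ‖z‖ ^ 2))).le
    have h1 := hP1' N _ (exp_pos (-(δ * ‖z‖ ^ 2))).le hw1
    rw [Polynomial.eval_pow, abs_mul, abs_of_pos (exp_pos _), abs_of_nonneg (pow_nonneg h0 n)]
    exact mul_le_of_le_one_right (exp_pos _).le (pow_le_one₀ h0 h1)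
  · intro z hz
    have hw1 : exp (-(δ * ‖z‖ ^ 2)) < 1 := by
      rw [exp_lt_one_iff]
      have : 0 < δ * ‖z‖ ^ 2 := by positivity
      linarith
    have := (hs _ (exp_pos _).le hw1).tendsto_sum_nat
    simp only [← hPe] at this
    simp only [Polynomial.eval_pow]
    exact (this.pow n).const_mul _
  · intro N
    exact skQ_poly d e δ he hδ.le _ (sk_coeff_pow _ (hPc N) n)

lemma skQ_step2 (d : ℕ) (hd : 1 ≤ d) (e ν b : ℝ) (he : 0 < e) (hν : 0 < ν) (hb : 0 < b) (hb1 : b ≤ 1) :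
    skQ d (fun z => exp (-(e * ‖z‖ ^ 2)) * exp (-(ν * (‖z‖ ^ 2) ^ b))) := by
  refine skQ_lim d (fun n z => exp (-(e * ‖z‖ ^ 2)) * (1 - (1 - exp (-((ν / (n+1 : ℕ)) ^ (1 / b) * ‖z‖ ^ 2))) ^ b) ^ (n+1)) _
    (fun z => exp (-(e * ‖z‖ ^ 2))) ?_ (sk_gauss_integrable d e he) ?_ ?_ hd ?_
  · intro n
    fun_prop
  · intro n z
    set w := exp (-((ν / (n+1 : ℕ)) ^ (1 / b) * ‖z‖ ^ 2)) with hw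
    have hw0 : 0 < w := exp_pos _
    have hw1 : w ≤ 1 := by
      rw [hw, exp_le_one_iff]
      have : 0 ≤ (ν / (n+1 : ℕ)) ^ (1 / b) * ‖z‖ ^ 2 := by positivity
      linarith
    have h0 : 0 ≤ (1 - w) ^ b := rpow_nonneg (by linarith) _
    have h1 : (1 - w) ^ b ≤ 1 := rpow_le_one (by linarith) (by linarith) hb.le
    rw [abs_mul, abs_of_pos (exp_pos _), abs_of_nonneg (pow_nonneg (by linarith) _)]
    exact mul_le_of_le_one_right (exp_pos _).le (pow_le_one₀ (by linarith) (by linarith))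
  · intro z hz
    have := (sk_tendsto b ν (‖z‖ ^ 2) hb hν (by positivity)).comp (tendsto_add_atTop_nat 1)
    exact this.const_mul _
  · intro n
    exact skQ_step1 d hd e _ b he (by positivity) hb hb1 (n+1)

lemma skQ_step3 (d : ℕ) (hd : 1 ≤ d) (ν α : ℝ) (hν : 0 < ν) (hα : 0 < α) (hα2 : α ≤ 2) :
    skQ d (fun z => exp (-(ν * ‖z‖ ^ α))) := by
  have hz : ∀ z : EuclideanSpace ℝ (Fin d), (‖z‖ ^ 2) ^ (α / 2) = ‖z‖ ^ α := by
    intro z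
    rw [← rpow_natCast, ← rpow_mul (norm_nonneg z)]
    congr 1
    push_cast
    ring
  refine skQ_lim d (fun n z => exp (-((1 / ((n:ℝ)+1)) * ‖z‖ ^ 2)) * exp (-(ν * ‖z‖ ^ α))) _
    (fun z => exp (-(ν * ‖z‖ ^ α))) ?_ (sk_integrable d hd ν α hν hα) ?_ ?_ hd ?_
  · intro n
    fun_prop
  · intro n z
    rw [abs_of_pos (by positivity)]
    refine mul_le_of_le_one_left (exp_pos _).le ?_
    rw [exp_le_one_iff]
    have : 0 ≤ (1 / ((n:ℝ)+1)) * ‖z‖ ^ 2 := by positivity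
    linarith
  · intro z _
    have h := (tendsto_one_div_add_atTop_nhds_zero_nat (𝕜 := ℝ)).mul_const (‖z‖ ^ 2)
    have h2 := (continuous_exp.tendsto _).comp h.neg
    have := h2.mul_const (exp (-(ν * ‖z‖ ^ α)))
    simpa using this
  · intro n
    have := skQ_step2 d hd (1 / ((n:ℝ)+1)) ν (α/2) (by positivity) hν (by positivity) (by linarith)
    simpa only [hz] using this

lemma skT_cont (d : ℕ) (hd : 1 ≤ d) (ν α : ℝ) (hν : 0 < ν) (hα : 0 < α) :
    Continuous (skT d (fun z => exp (-(ν * ‖z‖ ^ α)))) := by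
  unfold skT
  refine continuous_of_dominated (bound := fun z => exp (-(ν * ‖z‖ ^ α))) ?_ ?_ (sk_integrable d hd ν α hν hα) ?_
  · intro x
    exact Measurable.aestronglyMeasurable (by fun_prop)
  · intro x
    refine Eventually.of_forall fun z => ?_
    rw [norm_mul, Real.norm_eq_abs, Real.norm_eq_abs, abs_of_pos (exp_pos _)]
    exact mul_le_of_le_one_left (exp_pos _).le (abs_cos_le_one _)
  · exact Eventually.of_forall fun z => by fun_prop

lemma skT_pos (d : ℕ) (hd : 1 ≤ d) (ν α : ℝ) (hν : 0 < ν) (hα : 0 < α) (hα2 : α ≤ 2) (x) :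
    0 < skT d (fun z => exp (-(ν * ‖z‖ ^ α))) x := by
  obtain ⟨q0, q1⟩ := skQ_step3 d hd ν α hν hα hα2
  have hcont := skT_cont d hd ν α hν hα
  have h0 : 0 < skT d (fun z => exp (-(ν * ‖z‖ ^ α))) 0 := by
    unfold skT
    simp only [inner_zero_left, cos_zero, one_mul]
    exact integral_exp_pos (sk_integrable d hd ν α hν hα)
  by_contra hx
  have hx0 : skT d (fun z => exp (-(ν * ‖z‖ ^ α))) x = 0 := le_antisymm (not_lt.1 hx) (q0 x)
  have hk : ∀ k : ℕ, skT d (fun z => exp (-(ν * ‖z‖ ^ α))) ((1 / √2) ^ k • x) = 0 := by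
    intro k
    induction k with
    | zero => simpa using hx0
    | succ k ih =>
      have := q1 ((1 / √2) ^ k • x) ((1 / √2) ^ (k+1) • x) (by
        rw [pow_succ' (1 / √2), mul_smul, norm_smul (1 / √2), mul_pow]
        simp
        ring)
      rw [ih, zero_mul] at this
      exact pow_eq_zero_iff (two_ne_zero) |>.1 (le_antisymm this (sq_nonneg _))
  have ht : Tendsto (fun k : ℕ => (1 / √2) ^ k • x) atTop (𝓝 0) := by
    have := (tendsto_pow_atTop_nhds_zero_of_lt_one (r := 1 / √2) (by positivity) (by
      rw [div_lt_one (by positivity)]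
      exact Real.lt_sqrt_of_sq_lt (by norm_num))).smul_const x
    simpa using this
  have := (hcont.tendsto 0).comp ht
  have h2 := tendsto_nhds_unique this (by simp only [Function.comp_def, hk]; exact tendsto_const_nhds)
  linarith

lemma sk_kernel (d : ℕ) (hd : 1 ≤ d) (ν α : ℝ) (hν : 0 < ν) (hα : 0 < α) (s : ℝ) (hs : 0 < s)
    (x : EuclideanSpace ℝ (Fin d)) :
    stableKernel d ν α s x = ((2 * π) ^ d)⁻¹ * (((s ^ (1 / α)) ^ d)⁻¹ *
      skT d (fun z => exp (-(ν * ‖z‖ ^ α))) ((s ^ (1 / α))⁻¹ • x)) := by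
  have hρ : 0 < s ^ (1 / α) := by positivity
  have hρα : (s ^ (1 / α)) ^ α = s := by
    rw [← rpow_mul hs.le, one_div_mul_cancel hα.ne', rpow_one]
  have e1 : ∀ z : EuclideanSpace ℝ (Fin d), (Complex.exp (-(Complex.I * (⟪x, z⟫ : ℝ))) *
        Complex.exp (-((s * ν * ‖z‖ ^ α : ℝ) : ℂ))).re = cos ⟪x, z⟫ * exp (-((s * ν) * ‖z‖ ^ α)) := by
    intro z
    rw [← Complex.exp_add, Complex.exp_re]
    simp [-Complex.ofReal_mul, mul_comm]
  have hi : Integrable (fun z : EuclideanSpace ℝ (Fin d) => Complex.exp (-(Complex.I * (⟪x, z⟫ : ℝ))) *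
        Complex.exp (-((s * ν * ‖z‖ ^ α : ℝ) : ℂ))) := by
    refine (sk_integrable d hd (s * ν) α (by positivity) hα).mono' ?_ ?_
    · exact Measurable.aestronglyMeasurable (by fun_prop)
    · refine Filter.Eventually.of_forall fun z => ?_
      rw [norm_mul, Complex.norm_exp, Complex.norm_exp]
      simp [-Complex.ofReal_mul]
  have h3 := integral_re hi
  simp only [RCLike.re_to_complex, e1] at h3
  unfold stableKernel
  rw [← h3]
  congr 1
  have := Measure.integral_comp_smul (volume : Measure (EuclideanSpace ℝ (Fin d)))
    (fun z => cos ⟪(s ^ (1 / α))⁻¹ • x, z⟫ * exp (-(ν * ‖z‖ ^ α))) (s ^ (1 / α))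
  rw [finrank_euclideanSpace_fin, smul_eq_mul, abs_of_pos (by positivity)] at this
  unfold skT
  rw [← this]
  refine integral_congr_ae (Filter.Eventually.of_forall fun z => ?_)
  simp only [inner_smul_left, inner_smul_right, norm_smul, Real.norm_eq_abs, abs_of_pos hρ]
  rw [mul_rpow hρ.le (norm_nonneg z), hρα]
  congr 2
  · simp
    field_simp
  · ring

end skaux

/-- Proposition 5.1: for `M > 0` and `R > 0` there is `0 < c_R < 1` (independent of `t`
and `m`) such that for every `t > 0` there is `m₀ > 1` with
`∫_{B(0,R)} p_s(x-y) dy ≥ c_R` for all `m ≥ m₀`, all `t/(2m) ≤ s ≤ t/m` and all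
`x ∈ B(0, R + M(t/m)^{1/α})`. -/
theorem ball_mass_lower_bound (d : ℕ) (hd : 1 ≤ d) (ν α : ℝ) (hν : 0 < ν)
    (hα : 0 < α) (hα2 : α ≤ 2) (M : ℝ) (hM : 0 < M) (R : ℝ) (hR : 0 < R) :
    ∃ c : ℝ, 0 < c ∧ c < 1 ∧ ∀ t : ℝ, 0 < t → ∃ m₀ : ℝ, 1 < m₀ ∧
      ∀ m : ℝ, m₀ ≤ m → ∀ (s : ℝ) (x : EuclideanSpace ℝ (Fin d)),
        t / (2 * m) ≤ s → s ≤ t / m → ‖x‖ < R + M * (t / m) ^ (1 / α) →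
        c ≤ ∫ y in Metric.ball (0 : EuclideanSpace ℝ (Fin d)) R,
              stableKernel d ν α s (x - y) := by
  set K : ℝ := M * 2 ^ (1 / α) + 2 with hK
  have hK0 : 0 < K := by positivity
  have hcont := skT_cont d hd ν α hν hα
  have hpos := skT_pos d hd ν α hν hα hα2
  obtain ⟨x0, -, hx0⟩ := (isCompact_closedBall (0 : EuclideanSpace ℝ (Fin d)) K).exists_isMinOn
    ⟨0, by simp [hK0.le]⟩ hcont.continuousOn
  set c0 := skT d (fun z => exp (-(ν * ‖z‖ ^ α))) x0 with hc0
  have hc0p : 0 < c0 := hpos x0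
  set v := volume.real (Metric.ball (0 : EuclideanSpace ℝ (Fin d)) 1) with hv
  have hvp : 0 < v := ENNReal.toReal_pos (Metric.measure_ball_pos _ _ one_pos).ne' measure_ball_lt_top.ne
  refine ⟨min (((2 * π) ^ d)⁻¹ * c0 * v) (1/2), by positivity, lt_of_le_of_lt (min_le_right _ _) (by norm_num), ?_⟩
  intro t ht
  refine ⟨max 2 (t / R ^ α), lt_of_lt_of_le (by norm_num) (le_max_left _ _), ?_⟩
  intro m hm s x hs1 hs2 hx
  have hm2 : 2 ≤ m := (le_max_left _ _).trans hm
  have hmR : t / R ^ α ≤ m := (le_max_right _ _).trans hm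
  have hm0 : 0 < m := by linarith
  have hs : 0 < s := lt_of_lt_of_le (by positivity) hs1
  set ρ := s ^ (1 / α) with hρd
  have hρ : 0 < ρ := by positivity
  have hρR : ρ ≤ R := by
    have h1 : s ≤ R ^ α := by
      refine hs2.trans ?_
      rw [div_le_iff₀ hm0]
      rw [div_le_iff₀ (by positivity)] at hmR
      linarith
    calc ρ ≤ (R ^ α) ^ (1 / α) := rpow_le_rpow hs.le h1 (by positivity)
      _ = R := by rw [← rpow_mul hR.le, mul_one_div_cancel hα.ne', rpow_one]
  have hxρ : ‖x‖ < R + (K - 2) * ρ := by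
    refine hx.trans_le ?_
    have h1 : (t / m) ^ (1 / α) ≤ (2 * s) ^ (1 / α) := by
      refine rpow_le_rpow (by positivity) ?_ (by positivity)
      have : t / m = 2 * (t / (2 * m)) := by field_simp
      linarith
    rw [mul_rpow (by norm_num) hs.le] at h1
    have := mul_le_mul_of_nonneg_left h1 hM.le
    rw [hK]
    linarith
  have hK2 : 0 ≤ K - 2 := by
    rw [hK, add_sub_cancel_right]; positivity
  obtain ⟨w, hw1, hw2⟩ : ∃ w : EuclideanSpace ℝ (Fin d), ‖w‖ ≤ R - ρ ∧ ‖x - w‖ ≤ (K - 1) * ρ := by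
    by_cases h : ‖x‖ ≤ R - ρ
    · exact ⟨x, h, by rw [sub_self, norm_zero]; exact mul_nonneg (by linarith) hρ.le⟩
    · push Not at h
      have hx0 : 0 < ‖x‖ := by linarith
      refine ⟨((R - ρ) / ‖x‖) • x, ?_, ?_⟩
      · rw [norm_smul, Real.norm_eq_abs, abs_of_nonneg (div_nonneg (by linarith) hx0.le), div_mul_cancel₀ _ hx0.ne']
      · have : x - ((R - ρ) / ‖x‖) • x = (1 - (R - ρ) / ‖x‖) • x := by rw [sub_smul, one_smul]
        rw [this, norm_smul, Real.norm_eq_abs, abs_of_nonneg (by rw [sub_nonneg, div_le_one hx0]; exact h.le),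
          sub_mul, div_mul_cancel₀ _ hx0.ne']
        linarith
  have hkc : Continuous (fun y => stableKernel d ν α s (x - y)) := by
    simp only [sk_kernel d hd ν α hν hα s hs]
    have : Continuous (fun y => skT d (fun z => exp (-(ν * ‖z‖ ^ α))) ((s ^ (1 / α))⁻¹ • (x - y))) :=
      hcont.comp (by fun_prop)
    fun_prop
  have hint : IntegrableOn (fun y => stableKernel d ν α s (x - y)) (Metric.ball 0 R) :=
    (hkc.continuousOn.integrableOn_compact (isCompact_closedBall 0 R)).mono_set Metric.ball_subset_closedBall
  have hsub : Metric.ball w ρ ⊆ Metric.ball 0 R := Metric.ball_subset_ball' (by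
    rw [dist_zero_right]; linarith)
  have hnn : ∀ y, 0 ≤ stableKernel d ν α s (x - y) := by
    intro y
    rw [sk_kernel d hd ν α hν hα s hs]
    have := (hpos ((s ^ (1 / α))⁻¹ • (x - y))).le
    positivity
  have hlow : ∀ y ∈ Metric.ball w ρ, ((2 * π) ^ d)⁻¹ * ((ρ ^ d)⁻¹ * c0) ≤ stableKernel d ν α s (x - y) := by
    intro y hy
    rw [sk_kernel d hd ν α hν hα s hs]
    have : c0 ≤ skT d (fun z => exp (-(ν * ‖z‖ ^ α))) ((s ^ (1 / α))⁻¹ • (x - y)) := by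
      apply hx0
      rw [mem_closedBall_zero_iff, norm_smul, norm_inv, Real.norm_eq_abs, abs_of_pos hρ, inv_mul_le_iff₀ hρ]
      have h1 : ‖w - y‖ ≤ ρ := by
        rw [Metric.mem_ball, dist_comm, dist_eq_norm] at hy; exact hy.le
      have h2 : ‖x - y‖ ≤ ‖x - w‖ + ‖w - y‖ := by
        have := norm_add_le (x - w) (w - y); rwa [sub_add_sub_cancel] at this
      linarith
    gcongr
  have hvol : volume.real (Metric.ball w ρ) = ρ ^ d * v := by
    rw [measureReal_def, Measure.addHaar_ball_of_pos _ _ hρ, finrank_euclideanSpace_fin, ENNReal.toReal_mul,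
      ENNReal.toReal_ofReal (by positivity), hv, measureReal_def]
  calc min (((2 * π) ^ d)⁻¹ * c0 * v) (1/2) ≤ ((2 * π) ^ d)⁻¹ * c0 * v := min_le_left _ _
    _ = (((2 * π) ^ d)⁻¹ * ((ρ ^ d)⁻¹ * c0)) * volume.real (Metric.ball w ρ) := by
      rw [hvol]; field_simp
    _ ≤ ∫ y in Metric.ball w ρ, stableKernel d ν α s (x - y) :=
      setIntegral_ge_of_const_le_real measurableSet_ball measure_ball_lt_top.ne hlow (hint.mono_set hsub)
    _ ≤ _ := setIntegral_mono_set hint (Filter.Eventually.of_forall fun y => hnn y) hsub.eventuallyLE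
end

section
/- Let d = 1 and α ∈ (0,1), and fix t > 0. Then there exists a constant c > 0 such that for every integer m ≥ 2 and every s with t/(2m) ≤ s ≤ t/m, setting x := 1 + 1/m, one has ∫₀¹ p_s(x−y) dy ≤ c m^{α−1}. In particular this quantity tends to 0 as m → ∞. -/
open MeasureTheory Real

/-- The one-dimensional heat kernel of the fractional Laplacian `-ν(-Δ)^(α/2)`:
`p_t(x) = (2π)^{-1} ∫_ℝ e^{-i x z} e^{-tν|z|^α} dz`. -/
noncomputable def stableKernel1 (ν α t x : ℝ) : ℝ :=
  (2 * Real.pi)⁻¹ *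
    (∫ z : ℝ, Complex.exp (-(Complex.I * (x * z : ℝ))) *
        Complex.exp (-((t * ν * |z| ^ α : ℝ) : ℂ))).re

lemma G_deriv (a α x z : ℝ) (hx : 0 < x) (hz : 0 < z) :
    HasDerivAt (fun z : ℝ => sin (x * z) * exp (-a * z ^ α) / x
      + (1 + cos (x * z)) * (-a * α * z ^ (α - 1) * exp (-a * z ^ α)) / x ^ 2)
      (cos (x * z) * exp (-a * z ^ α) + (1 + cos (x * z)) *
        ((a * α * (1 - α) * z ^ (α - 2) + (a * α * z ^ (α - 1)) ^ 2) * exp (-a * z ^ α)) / x ^ 2) z := by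
  have hxz : HasDerivAt (fun z : ℝ => x * z) x z := by
    simpa using (hasDerivAt_id z).const_mul x
  have hs := hxz.sin
  have hc := hxz.cos
  have hp : HasDerivAt (fun z : ℝ => z ^ α) (α * z ^ (α - 1)) z :=
    Real.hasDerivAt_rpow_const (Or.inl hz.ne')
  have hp1 : HasDerivAt (fun z : ℝ => z ^ (α - 1)) ((α - 1) * z ^ (α - 2)) z := by
    have := Real.hasDerivAt_rpow_const (x := z) (p := α - 1) (Or.inl hz.ne')
    rwa [show α - 1 - 1 = α - 2 by ring] at this
  have hf := (hp.const_mul (-a)).exp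
  have := ((hs.mul hf).div_const x).add
    (((hc.const_add 1).mul ((hp1.const_mul (-a * α)).mul hf)).div_const (x ^ 2))
  refine this.congr_deriv ?_
  simp only [Pi.mul_apply]
  field_simp
  ring

lemma G_tendsto (a α x : ℝ) (ha : 0 < a) (hα : 0 < α) (hα1 : α < 1) (hx : 0 < x) :
    Filter.Tendsto (fun z : ℝ => sin (x * z) * exp (-a * z ^ α) / x
      + (1 + cos (x * z)) * (-a * α * z ^ (α - 1) * exp (-a * z ^ α)) / x ^ 2)
      Filter.atTop (nhds 0) := by
  have h1 : Filter.Tendsto (fun z : ℝ => exp (-a * z ^ α)) Filter.atTop (nhds 0) := by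
    apply Real.tendsto_exp_atBot.comp
    exact (tendsto_rpow_atTop hα).const_mul_atTop_of_neg (by linarith)
  have h2 : Filter.Tendsto (fun z : ℝ => z ^ (α - 1)) Filter.atTop (nhds 0) := by
    have := tendsto_rpow_neg_atTop (y := 1 - α) (by linarith)
    simpa using this
  have h3 : Filter.Tendsto (fun z : ℝ => exp (-a * z ^ α) / x
      + 2 * (a * α * z ^ (α - 1) * exp (-a * z ^ α)) / x ^ 2) Filter.atTop (nhds 0) := by
    have := (h1.div_const x).add ((((h2.const_mul (a * α)).mul h1).const_mul 2).div_const (x ^ 2))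
    simpa using this
  refine squeeze_zero_norm' ?_ h3
  filter_upwards [Filter.eventually_gt_atTop 0] with z hz
  have e := exp_pos (-a * z ^ α)
  have r := Real.rpow_pos_of_pos hz (α - 1)
  refine (norm_add_le _ _).trans ?_
  have k : |-a * α * z ^ (α - 1) * exp (-a * z ^ α)| = a * α * z ^ (α - 1) * exp (-a * z ^ α) := by
    rw [show -a * α * z ^ (α - 1) * exp (-a * z ^ α) = -(a * α * z ^ (α - 1) * exp (-a * z ^ α)) by ring,
      abs_neg, abs_of_pos (by positivity)]
  rw [norm_div, norm_div, norm_mul, norm_mul, Real.norm_eq_abs, Real.norm_eq_abs, Real.norm_eq_abs,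
    Real.norm_eq_abs, Real.norm_eq_abs, Real.norm_eq_abs, k, abs_of_pos e, abs_of_pos hx,
    abs_of_pos (show 0 < x ^ 2 by positivity)]
  have c2 : |1 + cos (x * z)| ≤ 2 := by
    rw [abs_le]; constructor <;> linarith [neg_one_le_cos (x * z), cos_le_one (x * z)]
  have s1 := abs_sin_le_one (x * z)
  gcongr
  nlinarith

lemma f_int (a α x : ℝ) (ha : 0 < a) (hα : 0 < α) :
    IntegrableOn (fun z : ℝ => cos (x * z) * exp (-a * z ^ α)) (Set.Ioi 0) := by
  have h : IntegrableOn (fun z : ℝ => exp (-a * z ^ α)) (Set.Ioi 0) := by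
    simpa using integrableOn_rpow_mul_exp_neg_mul_rpow (s := 0) (p := α) (b := a) (by norm_num) hα ha
  refine Integrable.mono' h ?_ ?_
  · apply Measurable.aestronglyMeasurable
    fun_prop
  · filter_upwards with z
    rw [norm_mul, Real.norm_eq_abs, Real.norm_eq_abs, abs_exp]
    have := abs_cos_le_one (x * z)
    nlinarith [exp_pos (-a * z ^ α)]

lemma tail_le (a α x : ℝ) (ha : 0 < a) (hα : 0 < α) (hα1 : α < 1) (hx : 0 < x) :
    ∫ z in Set.Ioi (π / x), cos (x * z) * exp (-a * z ^ α) ≤ 0 := by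
  have hT : 0 < π / x := by positivity
  have hi := (f_int a α x ha hα).mono_set (Set.Ioi_subset_Ioi hT.le)
  have h1 := intervalIntegral_tendsto_integral_Ioi (π / x) hi Filter.tendsto_id
  refine le_of_tendsto_of_tendsto h1 (G_tendsto a α x ha hα hα1 hx) ?_
  filter_upwards [Filter.eventually_ge_atTop (π / x)] with b hb
  have key := intervalIntegral.integral_le_sub_of_hasDeriv_right_of_le (a := π / x) (b := b)
    (φ := fun z : ℝ => cos (x * z) * exp (-a * z ^ α)) hb
    (fun z hz => (G_deriv a α x z hx (hT.trans_le hz.1)).continuousAt.continuousWithinAt)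
    (fun z hz => (G_deriv a α x z hx (hT.trans hz.1)).hasDerivWithinAt)
    (((f_int a α x ha hα)).mono_set (fun z hz => hT.trans_le hz.1))
    (fun z hz => by
      have hz0 : 0 < z := hT.trans hz.1
      have c1 : 0 ≤ 1 + cos (x * z) := by linarith [neg_one_le_cos (x * z)]
      have c2 : 0 ≤ 1 - α := by linarith
      have : 0 ≤ (1 + cos (x * z)) *
        ((a * α * (1 - α) * z ^ (α - 2) + (a * α * z ^ (α - 1)) ^ 2) * exp (-a * z ^ α)) / x ^ 2 := by
        positivity
      linarith)
  refine key.trans (le_of_eq ?_)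
  have : x * (π / x) = π := by field_simp
  simp [this]

lemma head_le (a α x : ℝ) (ha : 0 < a) (hα : 0 < α) (hx : 0 < x) :
    ∫ z in Set.Ioc 0 (π / x), cos (x * z) * exp (-a * z ^ α) ≤ a * (π / x) ^ (α + 1) / (α + 1) := by
  have hT : 0 < π / x := by positivity
  rw [← intervalIntegral.integral_of_le hT.le]
  have hc : ∫ z in (0:ℝ)..(π / x), cos (x * z) = 0 := by
    rw [intervalIntegral.integral_comp_mul_left (fun z => cos z) hx.ne']
    have : x * (π / x) = π := by field_simp
    simp [this]
  have hr : ∫ z in (0:ℝ)..(π / x), z ^ α = (π / x) ^ (α + 1) / (α + 1) := by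
    rw [integral_rpow (Or.inl (by linarith)), Real.zero_rpow (by linarith), sub_zero]
  have i1 : IntervalIntegrable (fun z : ℝ => cos (x * z)) volume 0 (π / x) :=
    Continuous.intervalIntegrable (by fun_prop) _ _
  have i2 : IntervalIntegrable (fun z : ℝ => z ^ α) volume 0 (π / x) :=
    intervalIntegral.intervalIntegrable_rpow' (by linarith)
  have i3 : IntervalIntegrable (fun z : ℝ => cos (x * z) * exp (-a * z ^ α)) volume 0 (π / x) := by
    rw [intervalIntegrable_iff_integrableOn_Ioc_of_le hT.le]
    exact (f_int a α x ha hα).mono_set (fun z hz => hz.1)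
  have : a * (π / x) ^ (α + 1) / (α + 1) = ∫ z in (0:ℝ)..(π / x), (cos (x * z) + a * z ^ α) := by
    rw [intervalIntegral.integral_add i1 (i2.const_mul a), hc, intervalIntegral.integral_const_mul, hr]
    ring
  rw [this]
  refine intervalIntegral.integral_mono_on hT.le i3 (i1.add (i2.const_mul a)) ?_
  intro z hz
  have e1 := Real.add_one_le_exp (-a * z ^ α)
  have hz' := Real.rpow_nonneg hz.1 α
  have e2 : exp (-a * z ^ α) ≤ 1 := by
    rw [Real.exp_le_one_iff]; nlinarith
  nlinarith [neg_one_le_cos (x * z)]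

lemma kernel_le (ν α s x : ℝ) (hν : 0 < ν) (hα : 0 < α) (hα1 : α < 1) (hs : 0 < s) (hx : 0 < x) :
    stableKernel1 ν α s x ≤ π⁻¹ * (s * ν * (π / x) ^ (α + 1) / (α + 1)) := by
  have ha : 0 < s * ν := by positivity
  have hT : 0 < π / x := by positivity
  unfold stableKernel1
  by_cases hI : Integrable (fun z : ℝ => Complex.exp (-(Complex.I * (x * z : ℝ))) *
        Complex.exp (-((s * ν * |z| ^ α : ℝ) : ℂ)))
  swap
  · rw [integral_undef hI]
    simp only [Complex.zero_re, mul_zero]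
    positivity
  have h1 : (∫ z : ℝ, Complex.exp (-(Complex.I * (x * z : ℝ))) *
        Complex.exp (-((s * ν * |z| ^ α : ℝ) : ℂ))).re
      = ∫ z : ℝ, cos (x * |z|) * exp (-(s * ν) * |z| ^ α) := by
    have := Complex.reCLM.integral_comp_comm hI
    rw [← Complex.reCLM_apply, ← this]
    congr 1
    ext z
    have hcos : cos (x * |z|) = cos (x * z) := by
      rcases abs_choice z with h | h <;> simp [h]
    rw [Complex.reCLM_apply, hcos, ← Complex.ofReal_neg, ← Complex.ofReal_exp, Complex.re_mul_ofReal,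
      Complex.exp_re]
    simp
  rw [h1, integral_comp_abs (f := fun z => cos (x * z) * exp (-(s * ν) * z ^ α))]
  have hi := f_int (s * ν) α x ha hα
  have h2 : ∫ z in Set.Ioi (0:ℝ), cos (x * z) * exp (-(s * ν) * z ^ α)
      = (∫ z in Set.Ioc 0 (π / x), cos (x * z) * exp (-(s * ν) * z ^ α))
        + ∫ z in Set.Ioi (π / x), cos (x * z) * exp (-(s * ν) * z ^ α) := by
    rw [← Set.Ioc_union_Ioi_eq_Ioi hT.le]
    exact setIntegral_union (Set.Ioc_disjoint_Ioi le_rfl) measurableSet_Ioi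
      (hi.mono_set (fun z hz => hz.1)) (hi.mono_set (Set.Ioi_subset_Ioi hT.le))
  have h3 := head_le (s * ν) α x ha hα hx
  have h4 := tail_le (s * ν) α x ha hα hα1 hx
  rw [show ∀ J : ℝ, (2 * π)⁻¹ * (2 * J) = π⁻¹ * J by intro J; field_simp]
  have : 0 < π⁻¹ := by positivity
  gcongr
  linarith

theorem remark_failure_alpha_lt_one (ν α : ℝ) (hν : 0 < ν) (hα : 0 < α) (hα1 : α < 1)
    (t : ℝ) (ht : 0 < t) :
    ∃ c > (0 : ℝ), ∀ m : ℕ, 2 ≤ m → ∀ s : ℝ, t / (2 * m) ≤ s → s ≤ t / m →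
      (∫ y in Set.Ioo (0 : ℝ) 1, stableKernel1 ν α s (1 + 1 / m - y))
        ≤ c * (m : ℝ) ^ (α - 1) := by
  set K : ℝ := π⁻¹ * (ν * π ^ (α + 1) / (α + 1)) with hK
  have hKpos : 0 < K := by positivity
  refine ⟨K * t / α, by positivity, ?_⟩
  intro m hm s hs1 hs2
  have hm0 : (0:ℝ) < m := by exact_mod_cast (by omega : 0 < m)
  have hs : 0 < s := lt_of_lt_of_le (by positivity) hs1
  have hq : (0:ℝ) < 1 / m := by positivity
  by_cases hI : IntegrableOn (fun y => stableKernel1 ν α s (1 + 1 / m - y)) (Set.Ioo (0 : ℝ) 1)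
  swap
  · rw [integral_undef hI]
    positivity
  have hcont : ContinuousOn (fun y : ℝ => K * s * (1 + 1 / m - y) ^ (-(α + 1))) (Set.Icc 0 1) := by
    refine ContinuousOn.mul continuousOn_const (ContinuousOn.rpow_const (by fun_prop) ?_)
    intro y hy
    left
    have := hy.2
    linarith
  have hI2 := (hcont.integrableOn_Icc (μ := volume)).mono_set Set.Ioo_subset_Icc_self
  have step := setIntegral_mono_on hI hI2 measurableSet_Ioo (fun y hy => by
    have hx : 0 < 1 + 1 / (m:ℝ) - y := by linarith [hy.2]
    refine (kernel_le ν α s _ hν hα hα1 hs hx).trans (le_of_eq ?_)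
    rw [Real.div_rpow pi_pos.le hx.le, Real.rpow_neg hx.le, hK]
    ring)
  refine step.trans ?_
  rw [← integral_Ioc_eq_integral_Ioo, ← intervalIntegral.integral_of_le zero_le_one,
    intervalIntegral.integral_const_mul,
    intervalIntegral.integral_comp_sub_left (fun u : ℝ => u ^ (-(α + 1))) (1 + 1 / (m:ℝ)),
    integral_rpow]
  · have e1 : (1 / (m:ℝ)) ^ (-α) = (m:ℝ) ^ α := by
      rw [one_div, Real.inv_rpow hm0.le, Real.rpow_neg hm0.le, inv_inv]
    have e2 : 0 ≤ (1 + 1 / (m:ℝ)) ^ (-α) := by positivity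
    have e3 : (m:ℝ) ^ (α - 1) = (m:ℝ) ^ α / m := by
      rw [Real.rpow_sub hm0, Real.rpow_one]
    have e4 : (((1 + 1 / (m:ℝ) - 0) ^ (-(α + 1) + 1) - (1 + 1 / (m:ℝ) - 1) ^ (-(α + 1) + 1)) / (-(α + 1) + 1))
        ≤ (m:ℝ) ^ α / α := by
      rw [show -(α + 1) + 1 = -α by ring, sub_zero, show 1 + 1 / (m:ℝ) - 1 = 1 / m by ring, e1,
        div_neg, ← neg_div]
      gcongr
      linarith
    calc _ ≤ K * s * ((m:ℝ) ^ α / α) := mul_le_mul_of_nonneg_left e4 (by positivity)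
      _ ≤ K * (t / m) * ((m:ℝ) ^ α / α) := by gcongr
      _ = _ := by rw [e3]; field_simp
  · right
    refine ⟨by linarith, ?_⟩
    rw [Set.uIcc_of_le (by linarith)]
    intro h
    have := h.1
    linarith
end
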